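/- arXiv:1811.03827 — 8 statements merged into one kernel-verified Lean document; each statement's English description precedes it below -/
import Mathlib

section
/- Let μ and ν be two finite Borel measures on ℝ with finite first moments, and let F and G be their distribution functions. Then the following are equivalent: (1) μ(ℝ) = ν(ℝ) and ((F−G)*(F−G))(A) ≥ 0 for every A ∈ ℝ; (2) μ*ν ≼_cx (1/2)(μ*μ + ν*ν). -/
open MeasureTheory Set

noncomputable def distFun (μ : Measure ℝ) (x : ℝ) : ℝ := (μ (Set.Iic x)).toReal

/-- Convolution of two real functions with respect to Lebesgue measure. -/
noncomputable def fconv (h₁ h₂ : ℝ → ℝ) (A : ℝ) : ℝ := ∫ t, h₁ t * h₂ (A - t)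

/-- Convex order for finite Borel measures on ℝ. -/
def ConvexOrder (μ ν : Measure ℝ) : Prop :=
  ∀ φ : ℝ → ℝ, ConvexOn ℝ Set.univ φ → Integrable φ μ → Integrable φ ν →
    ∫ x, φ x ∂μ ≤ ∫ x, φ x ∂ν

/-- Usual stochastic order: `μ ≤ₛₜ ν`. -/
def StochOrder (μ ν : Measure ℝ) : Prop :=
  μ Set.univ = ν Set.univ ∧ ∀ x : ℝ, distFun ν x ≤ distFun μ x

/-- k-fold convolution power of a measure. -/
noncomputable def convPow (μ : Measure ℝ) : ℕ → Measure ℝ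
  | 0 => Measure.dirac 0
  | n + 1 => Measure.conv (convPow μ n) μ

/-- Convolution of a list of measures. -/
noncomputable def convList : List (Measure ℝ) → Measure ℝ
  | [] => Measure.dirac 0
  | m :: l => Measure.conv m (convList l)

/-- Convolution polynomial of measures associated with a multivariate polynomial
with non-negative coefficients. -/
noncomputable def convPoly {m : ℕ} (P : MvPolynomial (Fin m) ℝ) (μ : Fin m → Measure ℝ) :
    Measure ℝ :=
  ∑ d ∈ P.support,
    ENNReal.ofReal (MvPolynomial.coeff d P) • convList (List.ofFn fun i => convPow (μ i) (d i))

lemma aux_fconv_lintegral (μ ν : Measure ℝ) [IsFiniteMeasure μ] [IsFiniteMeasure ν] (A : ℝ) :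
    ∫⁻ t, μ (Iic t) * ν (Iic (A - t)) = ∫⁻ z, ENNReal.ofReal (A - z) ∂(Measure.conv μ ν) := by
  have hS : MeasurableSet {q : ℝ × (ℝ × ℝ) | q.2.1 ≤ q.1 ∧ q.2.2 ≤ A - q.1} := by
    refine MeasurableSet.inter (s₁ := {q : ℝ × (ℝ × ℝ) | q.2.1 ≤ q.1})
      (s₂ := {q : ℝ × (ℝ × ℝ) | q.2.2 ≤ A - q.1}) ?_ ?_
    · exact measurableSet_le (by fun_prop) (by fun_prop)
    · exact measurableSet_le (by fun_prop) (by fun_prop)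
  have h1 := Measure.prod_apply (μ := (volume : Measure ℝ)) (ν := μ.prod ν) hS
  have h2 := Measure.prod_apply_symm (μ := (volume : Measure ℝ)) (ν := μ.prod ν) hS
  rw [Measure.conv, lintegral_map (by fun_prop) (by fun_prop)]
  calc _ = ∫⁻ t, (μ.prod ν) (Prod.mk t ⁻¹' {q : ℝ × (ℝ × ℝ) | q.2.1 ≤ q.1 ∧ q.2.2 ≤ A - q.1}) := by
        congr 1; ext t
        rw [← Measure.prod_prod]
        rfl
    _ = _ := by
        rw [← h1, h2]
        congr 1; ext p
        have : ((fun x => (x, p)) ⁻¹' {q : ℝ × (ℝ × ℝ) | q.2.1 ≤ q.1 ∧ q.2.2 ≤ A - q.1})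
            = Icc p.1 (A - p.2) := by
          ext t
          simp only [mem_preimage, mem_ofPred_eq, mem_Icc]
          constructor <;> rintro ⟨a, b⟩ <;> constructor <;> linarith
        rw [this, Real.volume_Icc]
        congr 1; ring

lemma aux_id_conv (μ ν : Measure ℝ) [IsFiniteMeasure μ] [IsFiniteMeasure ν]
    (hμ : Integrable (fun x : ℝ => x) μ) (hν : Integrable (fun x : ℝ => x) ν) :
    Integrable (fun x : ℝ => x) (Measure.conv μ ν) ∧
    ∫ x, x ∂(Measure.conv μ ν) = ν.real univ * ∫ x, x ∂μ + μ.real univ * ∫ x, x ∂ν := by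
  have hi : Integrable (fun x : ℝ => x) (Measure.conv μ ν) := by
    rw [Measure.conv, integrable_map_measure (by fun_prop) (by fun_prop)]
    exact (hμ.comp_fst ν).add (hν.comp_snd μ)
  refine ⟨hi, ?_⟩
  rw [integral_conv hi]
  have : ∀ x : ℝ, ∫ y, x + y ∂ν = ν.real univ * x + ∫ y, y ∂ν := by
    intro x
    rw [integral_add (integrable_const _) hν]
    simp
  simp_rw [this]
  rw [integral_add (hμ.const_mul _) (integrable_const _), integral_const_mul]
  simp

lemma aux_fconv (μ ν : Measure ℝ) [IsFiniteMeasure μ] [IsFiniteMeasure ν]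
    (h : Integrable (fun x : ℝ => x) (Measure.conv μ ν)) (A : ℝ) :
    Integrable (fun t => distFun μ t * distFun ν (A - t)) ∧
    ∫ t, distFun μ t * distFun ν (A - t) = ∫ z, max (A - z) 0 ∂(Measure.conv μ ν) := by
  have hm : ∀ (ρ : Measure ℝ) [IsFiniteMeasure ρ], Measurable (distFun ρ) := by
    intro ρ _
    apply Monotone.measurable
    intro x y hxy
    exact ENNReal.toReal_mono (measure_ne_top _ _) (measure_mono (Iic_subset_Iic.2 hxy))
  have hmm : Measurable (fun t => distFun μ t * distFun ν (A - t)) :=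
    (hm μ).mul ((hm ν).comp (by fun_prop))
  have hnn : ∀ t, 0 ≤ distFun μ t * distFun ν (A - t) := fun t =>
    mul_nonneg ENNReal.toReal_nonneg ENNReal.toReal_nonneg
  have hl : ∫⁻ t, ENNReal.ofReal (distFun μ t * distFun ν (A - t)) =
      ∫⁻ z, ENNReal.ofReal (max (A - z) 0) ∂(Measure.conv μ ν) := by
    calc _ = ∫⁻ t, μ (Iic t) * ν (Iic (A - t)) := by
          congr 1; ext t
          unfold distFun
          rw [ENNReal.ofReal_mul ENNReal.toReal_nonneg]
          simp [ENNReal.ofReal_toReal]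
      _ = _ := by
          rw [aux_fconv_lintegral]
          congr 1; ext z
          rcases le_total (A - z) 0 with h | h
          · simp [h, ENNReal.ofReal_of_nonpos h]
          · simp [h]
  have hi : Integrable (fun z : ℝ => max (A - z) 0) (Measure.conv μ ν) :=
    ((integrable_const A).sub h).pos_part
  constructor
  · refine ⟨hmm.aestronglyMeasurable, ?_⟩
    rw [hasFiniteIntegral_iff_ofReal (Filter.Eventually.of_forall hnn), hl]
    exact (hasFiniteIntegral_iff_ofReal (Filter.Eventually.of_forall fun z => le_max_right _ _)).1 hi.2
  · rw [integral_eq_lintegral_of_nonneg_ae (Filter.Eventually.of_forall hnn) hmm.aestronglyMeasurable,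
      integral_eq_lintegral_of_nonneg_ae (f := fun z => max (A - z) 0)
        (Filter.Eventually.of_forall fun z => le_max_right _ _)
        hi.aestronglyMeasurable, hl]

lemma aux_ftc (φ : ℝ → ℝ) (hφ : ConvexOn ℝ univ φ) :
    ∃ g : StieltjesFunction ℝ, ∀ a b : ℝ, ∫ t in a..b, g t = φ b - φ a := by
  have hd : ∀ x, HasDerivWithinAt φ (derivWithin φ (Ioi x) x) (Ioi x) x := fun x =>
    hφ.hasDerivWithinAt_rightDeriv_of_mem_interior (by simp)
  have hmono : Monotone (fun x => derivWithin φ (Ioi x) x) := by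
    have := hφ.monotoneOn_rightDeriv
    rwa [interior_univ, monotoneOn_univ] at this
  have hcont : Continuous φ := by
    have := hφ.continuousOn_interior
    rwa [interior_univ, continuousOn_univ] at this
  refine ⟨hmono.stieltjesFunction, fun a b => ?_⟩
  have hae : ∀ᵐ t : ℝ, hmono.stieltjesFunction t = derivWithin φ (Ioi t) t := by
    have := hmono.countable_not_continuousAt.ae_notMem (volume : Measure ℝ)
    filter_upwards [this] with t ht
    simp only [not_not] at ht
    rw [hmono.stieltjesFunction_eq]
    exact tendsto_nhds_unique (hmono.tendsto_rightLim t) (ht.mono_left nhdsWithin_le_nhds)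
  rw [intervalIntegral.integral_congr_ae (g := fun t => derivWithin φ (Ioi t) t)
    (hae.mono fun t ht _ => ht)]
  exact intervalIntegral.integral_eq_sub_of_hasDeriv_right hcont.continuousOn (fun x _ => hd x)
    hmono.intervalIntegrable

noncomputable def auxK (x a : ℝ) : ENNReal :=
  if 0 < a then ENNReal.ofReal (x - a) else ENNReal.ofReal (a - x)

lemma aux_repr (φ : ℝ → ℝ) (g : StieltjesFunction ℝ)
    (hg : ∀ a b : ℝ, ∫ t in a..b, g t = φ b - φ a) (x : ℝ) :
    0 ≤ φ x - φ 0 - g 0 * x ∧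
    ENNReal.ofReal (φ x - φ 0 - g 0 * x) = ∫⁻ a, auxK x a ∂g.measure := by
  have hint : ∀ a b : ℝ, IntervalIntegrable g volume a b := fun a b => g.mono.intervalIntegrable
  rcases le_total 0 x with hx | hx
  · have hR : φ x - φ 0 - g 0 * x = ∫ t in Ioc 0 x, (g t - g 0) := by
      rw [← intervalIntegral.integral_of_le hx, intervalIntegral.integral_sub (hint _ _) (by simp), hg]
      simp; ring
    have hnn : ∀ᵐ t ∂(volume.restrict (Ioc 0 x)), 0 ≤ g t - g 0 := by
      filter_upwards [ae_restrict_mem measurableSet_Ioc] with t ht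
      exact sub_nonneg.2 (g.mono ht.1.le)
    rw [hR]
    refine ⟨integral_nonneg_of_ae hnn, ?_⟩
    rw [ofReal_integral_eq_lintegral_ofReal (((hint 0 x).sub (by simp)).1) hnn]
    have hS : MeasurableSet {q : ℝ × ℝ | 0 < q.1 ∧ q.1 ≤ x ∧ 0 < q.2 ∧ q.2 ≤ q.1} := by
      measurability
    have h1 := Measure.prod_apply (μ := (volume : Measure ℝ)) (ν := g.measure) hS
    have h2 := Measure.prod_apply_symm (μ := (volume : Measure ℝ)) (ν := g.measure) hS
    rw [← lintegral_indicator measurableSet_Ioc]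
    calc _ = ∫⁻ t, g.measure (Prod.mk t ⁻¹'
            {q : ℝ × ℝ | 0 < q.1 ∧ q.1 ≤ x ∧ 0 < q.2 ∧ q.2 ≤ q.1}) := by
          congr 1; ext t
          by_cases ht : t ∈ Ioc 0 x
          · rw [indicator_of_mem ht, ← g.measure_Ioc]
            congr 1; ext a; simp [ht.1, ht.2]
          · rw [indicator_of_notMem ht]
            symm
            convert measure_empty (μ := g.measure)
            ext a
            simp only [mem_preimage, mem_ofPred_eq, mem_empty_iff_false, iff_false]
            exact fun h => ht ⟨h.1, h.2.1⟩
      _ = _ := by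
          rw [← h1, h2]
          congr 1; ext a
          unfold auxK
          split_ifs with ha
          · rw [← Real.volume_Icc]
            congr 1; ext t
            simp only [mem_preimage, mem_ofPred_eq, mem_Icc]
            constructor
            · rintro ⟨_, h, _, h'⟩; exact ⟨h', h⟩
            · rintro ⟨h, h'⟩; exact ⟨by linarith, h', ha, h⟩
          · rw [ENNReal.ofReal_of_nonpos (by linarith)]
            convert measure_empty (μ := (volume : Measure ℝ))
            ext t
            simp only [mem_preimage, mem_ofPred_eq, mem_empty_iff_false, iff_false]
            exact fun h => ha h.2.2.1
  · have hR : φ x - φ 0 - g 0 * x = ∫ t in Ioc x 0, (g 0 - g t) := by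
      rw [← intervalIntegral.integral_of_le hx, intervalIntegral.integral_sub (by simp) (hint _ _), hg]
      simp; ring
    have hnn : ∀ᵐ t ∂(volume.restrict (Ioc x 0)), 0 ≤ g 0 - g t := by
      filter_upwards [ae_restrict_mem measurableSet_Ioc] with t ht
      exact sub_nonneg.2 (g.mono ht.2)
    rw [hR]
    refine ⟨integral_nonneg_of_ae hnn, ?_⟩
    rw [ofReal_integral_eq_lintegral_ofReal ((IntervalIntegrable.sub (by simp) (hint x 0)).1) hnn]
    have hS : MeasurableSet {q : ℝ × ℝ | x < q.1 ∧ q.1 ≤ 0 ∧ q.1 < q.2 ∧ q.2 ≤ 0} := by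
      measurability
    have h1 := Measure.prod_apply (μ := (volume : Measure ℝ)) (ν := g.measure) hS
    have h2 := Measure.prod_apply_symm (μ := (volume : Measure ℝ)) (ν := g.measure) hS
    rw [← lintegral_indicator measurableSet_Ioc]
    calc _ = ∫⁻ t, g.measure (Prod.mk t ⁻¹'
            {q : ℝ × ℝ | x < q.1 ∧ q.1 ≤ 0 ∧ q.1 < q.2 ∧ q.2 ≤ 0}) := by
          congr 1; ext t
          by_cases ht : t ∈ Ioc x 0
          · rw [indicator_of_mem ht, ← g.measure_Ioc]
            congr 1; ext a; simp [ht.1, ht.2]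
          · rw [indicator_of_notMem ht]
            symm
            convert measure_empty (μ := g.measure)
            ext a
            simp only [mem_preimage, mem_ofPred_eq, mem_empty_iff_false, iff_false]
            exact fun h => ht ⟨h.1, h.2.1⟩
      _ = _ := by
          rw [← h1, h2]
          congr 1; ext a
          unfold auxK
          split_ifs with ha
          · rw [ENNReal.ofReal_of_nonpos (by linarith)]
            convert measure_empty (μ := (volume : Measure ℝ))
            ext t
            simp only [mem_preimage, mem_ofPred_eq, mem_empty_iff_false, iff_false]
            exact fun h => absurd h.2.2.2 (not_le.2 ha)
          · rw [← Real.volume_Ioo]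
            congr 1; ext t
            simp only [mem_preimage, mem_ofPred_eq, mem_Ioo]
            constructor
            · rintro ⟨h, _, h', _⟩; exact ⟨h, h'⟩
            · rintro ⟨h, h'⟩; exact ⟨h, by linarith, h', by linarith⟩

lemma aux_order (P Q : Measure ℝ) [IsFiniteMeasure P] [IsFiniteMeasure Q]
    (hP : Integrable (fun x : ℝ => x) P) (hQ : Integrable (fun x : ℝ => x) Q)
    (hmass : P.real univ = Q.real univ) (hmean : ∫ x, x ∂P = ∫ x, x ∂Q)
    (h : ∀ A : ℝ, ∫ z, max (A - z) 0 ∂P ≤ ∫ z, max (A - z) 0 ∂Q) : ConvexOrder P Q := by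
  intro φ hφ hφP hφQ
  obtain ⟨g, hg⟩ := aux_ftc φ hφ
  have hrepr := aux_repr φ g hg
  have hKm : Measurable (fun p : ℝ × ℝ => auxK p.1 p.2) := by
    unfold auxK
    apply Measurable.ite
    · exact measurableSet_lt (by fun_prop) (by fun_prop)
    · fun_prop
    · fun_prop
  have hiP : ∀ A : ℝ, Integrable (fun z : ℝ => max (A - z) 0) P := fun A =>
    ((integrable_const A).sub hP).pos_part
  have hiQ : ∀ A : ℝ, Integrable (fun z : ℝ => max (A - z) 0) Q := fun A =>
    ((integrable_const A).sub hQ).pos_part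
  have hofR : ∀ y : ℝ, ENNReal.ofReal y = ENNReal.ofReal (max y 0) := by
    intro y
    rcases le_total y 0 with h | h
    · simp [h, ENNReal.ofReal_of_nonpos h]
    · simp [h]
  have hflip : ∀ a : ℝ, (fun z : ℝ => max (z - a) 0) = fun z => max (a - z) 0 + (z - a) := by
    intro a; ext z
    rcases le_total z a with h | h
    · rw [max_eq_right (by linarith), max_eq_left (by linarith)]; ring
    · rw [max_eq_left (by linarith), max_eq_right (by linarith)]; ring
  have hK : ∀ a, ∫⁻ x, auxK x a ∂P ≤ ∫⁻ x, auxK x a ∂Q := by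
    intro a
    unfold auxK
    split_ifs with ha
    · have e : ∀ (ρ : Measure ℝ) [IsFiniteMeasure ρ], Integrable (fun x : ℝ => x) ρ →
          Integrable (fun z : ℝ => max (a - z) 0) ρ →
          ∫⁻ x, ENNReal.ofReal (x - a) ∂ρ =
          ENNReal.ofReal (∫ z, max (a - z) 0 ∂ρ + (∫ x, x ∂ρ - ρ.real univ * a)) := by
        intro ρ _ h1 h2
        have h3 : Integrable (fun z : ℝ => z - a) ρ := h1.sub (integrable_const a)
        have h4 : ∫ z, (z - a) ∂ρ = ∫ x, x ∂ρ - ρ.real univ * a := by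
          rw [integral_sub h1 (integrable_const a)]; simp
        simp_rw [hofR (_ - a)]
        rw [← ofReal_integral_eq_lintegral_ofReal (h3.pos_part)
          (Filter.Eventually.of_forall fun z => le_max_right _ _), hflip, integral_add h2 h3, h4]
      rw [e P hP (hiP a), e Q hQ (hiQ a), hmass, hmean]
      exact ENNReal.ofReal_le_ofReal (by linarith [h a])
    · simp_rw [hofR (a - _)]
      rw [← ofReal_integral_eq_lintegral_ofReal (hiP a)
          (Filter.Eventually.of_forall fun z => le_max_right _ _),
        ← ofReal_integral_eq_lintegral_ofReal (hiQ a)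
          (Filter.Eventually.of_forall fun z => le_max_right _ _)]
      exact ENNReal.ofReal_le_ofReal (h a)
  have hRi : ∀ (ρ : Measure ℝ) [IsFiniteMeasure ρ], Integrable (fun x : ℝ => x) ρ →
      Integrable φ ρ → Integrable (fun x => φ x - φ 0 - g 0 * x) ρ := fun ρ _ h1 h2 =>
    (h2.sub (integrable_const _)).sub (h1.const_mul _)
  have hRv : ∀ (ρ : Measure ℝ) [IsFiniteMeasure ρ], Integrable (fun x : ℝ => x) ρ →
      Integrable φ ρ → ∫ x, (φ x - φ 0 - g 0 * x) ∂ρ =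
        ∫ x, φ x ∂ρ - ρ.real univ * φ 0 - g 0 * ∫ x, x ∂ρ := by
    intro ρ _ h1 h2
    rw [integral_sub (f := fun x => φ x - φ 0) (h2.sub (integrable_const _)) (h1.const_mul _),
      integral_sub h2 (integrable_const _), integral_const_mul]
    simp
  have hRl : ∀ (ρ : Measure ℝ) [IsFiniteMeasure ρ], Integrable (fun x : ℝ => x) ρ →
      Integrable φ ρ → ENNReal.ofReal (∫ x, (φ x - φ 0 - g 0 * x) ∂ρ) =
        ∫⁻ a, ∫⁻ x, auxK x a ∂ρ ∂g.measure := by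
    intro ρ _ h1 h2
    rw [ofReal_integral_eq_lintegral_ofReal (hRi ρ h1 h2)
      (Filter.Eventually.of_forall fun x => (hrepr x).1), lintegral_congr fun x => (hrepr x).2]
    exact lintegral_lintegral_swap hKm.aemeasurable
  have hfin : ENNReal.ofReal (∫ x, (φ x - φ 0 - g 0 * x) ∂P) ≤
      ENNReal.ofReal (∫ x, (φ x - φ 0 - g 0 * x) ∂Q) := by
    rw [hRl P hP hφP, hRl Q hQ hφQ]
    exact lintegral_mono hK
  rw [ENNReal.ofReal_le_ofReal_iff (integral_nonneg fun x => (hrepr x).1),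
    hRv P hP hφP, hRv Q hQ hφQ, hmass, hmean] at hfin
  linarith

/-- Theorem 2.3: For finite Borel measures μ, ν on ℝ with finite
first moments, with distribution functions F, G, the following are equivalent:
(1) μ(ℝ) = ν(ℝ) and (F−G)∗(F−G) ≥ 0; (2) μ∗ν ≼ₓ ½(μ∗μ + ν∗ν). -/
theorem stmt0 (μ ν : Measure ℝ) [IsFiniteMeasure μ] [IsFiniteMeasure ν]
    (hμ : Integrable (fun x : ℝ => |x|) μ) (hν : Integrable (fun x : ℝ => |x|) ν) :
    (μ Set.univ = ν Set.univ ∧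
        ∀ A : ℝ, 0 ≤ fconv (fun t => distFun μ t - distFun ν t)
          (fun t => distFun μ t - distFun ν t) A) ↔
      ConvexOrder (Measure.conv μ ν)
        ((2 : ENNReal)⁻¹ • (Measure.conv μ μ + Measure.conv ν ν)) := by
  have hμ' : Integrable (fun x : ℝ => x) μ :=
    (integrable_norm_iff (by fun_prop)).1 hμ
  have hν' : Integrable (fun x : ℝ => x) ν :=
    (integrable_norm_iff (by fun_prop)).1 hν
  obtain ⟨i1, m1⟩ := aux_id_conv μ μ hμ' hμ'
  obtain ⟨i2, m2⟩ := aux_id_conv μ ν hμ' hν'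
  obtain ⟨i3, m3⟩ := aux_id_conv ν ν hν' hν'
  have i2' : Integrable (fun x : ℝ => x) (Measure.conv ν μ) := by rwa [Measure.conv_comm]
  have hQ : ∀ f : ℝ → ℝ, Integrable f (Measure.conv μ μ) → Integrable f (Measure.conv ν ν) →
      Integrable f ((2 : ENNReal)⁻¹ • (Measure.conv μ μ + Measure.conv ν ν)) ∧
      ∫ x, f x ∂((2 : ENNReal)⁻¹ • (Measure.conv μ μ + Measure.conv ν ν)) =
      (1 / 2) * (∫ x, f x ∂(Measure.conv μ μ) + ∫ x, f x ∂(Measure.conv ν ν)) := by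
    intro f h1 h2
    refine ⟨(h1.add_measure h2).smul_measure (by simp), ?_⟩
    rw [integral_smul_measure, integral_add_measure h1 h2]
    simp
  have : IsFiniteMeasure ((2 : ENNReal)⁻¹ • (Measure.conv μ μ + Measure.conv ν ν)) :=
    Measure.smul_finite _ (by simp)
  have hmax : ∀ (A : ℝ) (ρ : Measure ℝ) [IsFiniteMeasure ρ], Integrable (fun x : ℝ => x) ρ →
      Integrable (fun z : ℝ => max (A - z) 0) ρ := fun A ρ _ h =>
    ((integrable_const A).sub h).pos_part
  have hconvreal : ∀ (α β : Measure ℝ) [IsFiniteMeasure α] [IsFiniteMeasure β],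
      (Measure.conv α β).real univ = α.real univ * β.real univ := by
    intro α β _ _
    rw [Measure.conv, Measure.real, Measure.map_apply (by fun_prop) MeasurableSet.univ, preimage_univ,
      ← univ_prod_univ, Measure.prod_prod, ENNReal.toReal_mul]
    rfl
  have hQmass : ((2 : ENNReal)⁻¹ • (Measure.conv μ μ + Measure.conv ν ν)).real univ =
      (1 / 2) * (μ.real univ * μ.real univ + ν.real univ * ν.real univ) := by
    have := (hQ (fun _ => (1 : ℝ)) (integrable_const _) (integrable_const _)).2
    simpa [hconvreal] using this
  have key : ∀ A : ℝ, fconv (fun t => distFun μ t - distFun ν t)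
      (fun t => distFun μ t - distFun ν t) A =
      2 * (∫ z, max (A - z) 0 ∂((2 : ENNReal)⁻¹ • (Measure.conv μ μ + Measure.conv ν ν))
        - ∫ z, max (A - z) 0 ∂(Measure.conv μ ν)) := by
    intro A
    obtain ⟨j1, k1⟩ := aux_fconv μ μ i1 A
    obtain ⟨j2, k2⟩ := aux_fconv μ ν i2 A
    obtain ⟨j3, k3⟩ := aux_fconv ν ν i3 A
    obtain ⟨j4, k4⟩ := aux_fconv ν μ i2' A
    rw [Measure.conv_comm ν μ] at k4
    rw [(hQ _ (hmax A _ i1) (hmax A _ i3)).2, ← k1, ← k3]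
    unfold fconv
    have e : (fun t => (distFun μ t - distFun ν t) * (distFun μ (A - t) - distFun ν (A - t))) =
        fun t => (distFun μ t * distFun μ (A - t) + distFun ν t * distFun ν (A - t)) -
          (distFun μ t * distFun ν (A - t) + distFun ν t * distFun μ (A - t)) := by
      ext t; ring
    rw [e, integral_sub
      (f := fun t => distFun μ t * distFun μ (A - t) + distFun ν t * distFun ν (A - t))
      (g := fun t => distFun μ t * distFun ν (A - t) + distFun ν t * distFun μ (A - t))
      (j1.add j3) (j2.add j4), integral_add j1 j3, integral_add j2 j4, k2, k4]
    ring
  constructor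
  · rintro ⟨hm, hA⟩
    have hmr : μ.real univ = ν.real univ := by simp [Measure.real, hm]
    refine aux_order _ _ i2 (hQ _ i1 i3).1 ?_ ?_ ?_
    · rw [hconvreal, hQmass, hmr]; ring
    · rw [(hQ _ i1 i3).2, m1, m2, m3, hmr]; ring
    · intro A
      have := hA A
      rw [key] at this
      linarith
  · intro h
    constructor
    · have c1 := h (fun _ => 1) (convexOn_const _ convex_univ) (integrable_const _) (integrable_const _)
      have c2 := h (fun _ => -1) (convexOn_const _ convex_univ) (integrable_const _)
        (integrable_const _)
      simp only [integral_const, smul_eq_mul, hconvreal, hQmass] at c1 c2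
      have : (μ.real univ - ν.real univ) ^ 2 = 0 := by nlinarith
      have := sub_eq_zero.1 (pow_eq_zero_iff (two_ne_zero)|>.1 this)
      exact (ENNReal.toReal_eq_toReal_iff' (measure_ne_top _ _) (measure_ne_top _ _)).1 this
    · intro A
      rw [key]
      have hc : ConvexOn ℝ univ (fun z : ℝ => max (A - z) 0) := by
        apply ConvexOn.sup
        · exact (convexOn_const A convex_univ).sub (concaveOn_id convex_univ)
        · exact convexOn_const _ convex_univ
      have := h _ hc (hmax A _ i2) (hQ _ (hmax A _ i1) (hmax A _ i3)).1
      linarith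
end

section
/- Let μ and ν be two probability distributions on ℝ with finite first moments such that μ ≤_st ν or ν ≤_st μ. Then μ*ν ≼_cx (1/2)(μ*μ + ν*ν). -/
open MeasureTheory Set

lemma aux_four (φ : ℝ → ℝ) (h : ConvexOn ℝ Set.univ φ) (a b c d : ℝ) (hab : a ≤ b) (hac : a ≤ c)
    (hs : b + c = a + d) : φ b + φ c ≤ φ a + φ d := by
  rcases eq_or_lt_of_le (show a ≤ d by linarith) with h1 | h1
  · have hb : b = a := by linarith
    have hc : c = d := by linarith
    rw [hb, hc]
  · have hd : 0 < d - a := by linarith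
    have hs1 : (d - b) / (d - a) + (b - a) / (d - a) = 1 := by field_simp; ring
    have p1 : 0 ≤ (d - b) / (d - a) := div_nonneg (by linarith) hd.le
    have p2 : 0 ≤ (b - a) / (d - a) := div_nonneg (by linarith) hd.le
    have e1 := h.2 (mem_univ a) (mem_univ d) p1 p2 hs1
    have e2 := h.2 (mem_univ a) (mem_univ d) p2 p1 (by linarith)
    simp only [smul_eq_mul] at e1 e2
    have hb : (d - b) / (d - a) * a + (b - a) / (d - a) * d = b := by field_simp; ring
    have hc : (b - a) / (d - a) * a + (d - b) / (d - a) * d = c := by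
      have : c = a + d - b := by linarith
      rw [this]; field_simp; ring
    rw [hb] at e1
    rw [hc] at e2
    have : φ a + φ d = ((d - b) / (d - a) + (b - a) / (d - a)) * φ a
      + ((d - b) / (d - a) + (b - a) / (d - a)) * φ d := by rw [hs1]; ring
    linarith

noncomputable def quant (μ : Measure ℝ) (u : ℝ) : ℝ := sInf {x | u ≤ ProbabilityTheory.cdf μ x}

lemma quant_le_iff (μ : Measure ℝ) (u x : ℝ) (hu : u ∈ Ioo (0 : ℝ) 1) :
    quant μ u ≤ x ↔ u ≤ ProbabilityTheory.cdf μ x := by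
  set F := ProbabilityTheory.cdf μ with hF
  have hne : {x | u ≤ F x}.Nonempty := by
    have := (ProbabilityTheory.tendsto_cdf_atTop μ).eventually (lt_mem_nhds hu.2)
    obtain ⟨y, hy⟩ := this.exists
    exact ⟨y, hy.le⟩
  have hbd : BddBelow {x | u ≤ F x} := by
    have := (ProbabilityTheory.tendsto_cdf_atBot μ).eventually (gt_mem_nhds hu.1)
    obtain ⟨y, hy⟩ := this.exists
    refine ⟨y, fun z hz => ?_⟩
    by_contra hlt
    push Not at hlt
    have := F.mono hlt.le
    have hz' : u ≤ F z := hz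
    linarith
  constructor
  · intro h
    have hc : ContinuousWithinAt F (Ici x) x := F.right_continuous x
    have hc' : Filter.Tendsto F (nhdsWithin x (Ioi x)) (nhds (F x)) :=
      hc.mono_left (nhdsWithin_mono _ Ioi_subset_Ici_self)
    refine ge_of_tendsto hc' ?_
    filter_upwards [self_mem_nhdsWithin] with y hy
    obtain ⟨z, hz, hzy⟩ := (csInf_lt_iff hbd hne).1 (lt_of_le_of_lt h hy)
    exact le_trans hz (F.mono hzy.le)
  · intro h
    exact csInf_le hbd h

lemma quant_aem (μ : Measure ℝ) : AEMeasurable (quant μ) (volume.restrict (Ioo (0:ℝ) 1)) := by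
  refine aemeasurable_restrict_of_monotoneOn measurableSet_Ioo ?_
  intro u hu v hv huv
  rw [quant_le_iff μ u _ hu]
  exact huv.trans ((quant_le_iff μ v _ hv).1 le_rfl)

lemma quant_map (μ : Measure ℝ) [IsProbabilityMeasure μ] :
    (volume.restrict (Ioo (0:ℝ) 1)).map (quant μ) = μ := by
  have : IsFiniteMeasure ((volume.restrict (Ioo (0:ℝ) 1)).map (quant μ)) := inferInstance
  refine Measure.ext_of_Iic _ _ fun x => ?_
  rw [Measure.map_apply_of_aemeasurable (quant_aem μ) measurableSet_Iic,
    Measure.restrict_apply₀' measurableSet_Ioo.nullMeasurableSet]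
  have h1 : quant μ ⁻¹' Iic x ∩ Ioo 0 1 = Iic (ProbabilityTheory.cdf μ x) ∩ Ioo 0 1 := by
    ext u
    simp only [mem_inter_iff, mem_preimage, mem_Iic]
    constructor
    · rintro ⟨a, b⟩; exact ⟨(quant_le_iff μ u x b).1 a, b⟩
    · rintro ⟨a, b⟩; exact ⟨(quant_le_iff μ u x b).2 a, b⟩
  rw [h1, ← Measure.restrict_apply measurableSet_Iic, Measure.restrict_congr_set Ioo_ae_eq_Ioc,
    Measure.restrict_apply measurableSet_Iic]
  have h2 : Iic (ProbabilityTheory.cdf μ x) ∩ Ioc (0:ℝ) 1 = Ioc 0 (ProbabilityTheory.cdf μ x) := by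
    ext u
    have := ProbabilityTheory.cdf_le_one μ x
    simp only [mem_inter_iff, mem_Ioc, mem_Iic]
    constructor
    · rintro ⟨a, b, c⟩; exact ⟨b, a⟩
    · rintro ⟨a, b⟩; exact ⟨b, a, b.trans this⟩
  rw [h2, Real.volume_Ioc, sub_zero, ProbabilityTheory.ofReal_cdf]

lemma conv_coupling {P : Measure ℝ} [SFinite P] {μ ν : Measure ℝ} {X Y : ℝ → ℝ}
    (hX : Measurable X) (hY : Measurable Y) (h1 : P.map X = μ) (h2 : P.map Y = ν) :
    Measure.conv μ ν = (P.prod P).map (fun p => X p.1 + Y p.2) := by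
  subst h1 h2
  rw [Measure.conv, Measure.map_prod_map _ _ hX hY, Measure.map_map (by fun_prop) (by fun_prop)]
  rfl

lemma stmt1_core (μ ν : Measure ℝ) [IsProbabilityMeasure μ] [IsProbabilityMeasure ν]
    (hst : StochOrder μ ν) :
    ConvexOrder (Measure.conv μ ν)
      ((2 : ENNReal)⁻¹ • (Measure.conv μ μ + Measure.conv ν ν)) := by
  intro φ hφ i1 i2
  have hcont : Continuous φ := by
    rw [← continuousOn_univ]; exact hφ.continuousOn isOpen_univ
  rw [integrable_smul_measure (by simp) (by simp), integrable_add_measure] at i2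
  obtain ⟨i2, i3⟩ := i2
  rw [integral_smul_measure, integral_add_measure i2 i3]
  set P := volume.restrict (Ioo (0:ℝ) 1) with hP
  have aX := quant_aem μ
  have aY := quant_aem ν
  set X := aX.mk (quant μ)
  set Y := aY.mk (quant ν)
  have mX : Measurable X := aX.measurable_mk
  have mY : Measurable Y := aY.measurable_mk
  have eX : P.map X = μ := by rw [← Measure.map_congr aX.ae_eq_mk]; exact quant_map μ
  have eY : P.map Y = ν := by rw [← Measure.map_congr aY.ae_eq_mk]; exact quant_map ν
  have hle : ∀ᵐ u ∂P, X u ≤ Y u := by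
    filter_upwards [aX.ae_eq_mk, aY.ae_eq_mk, ae_restrict_mem measurableSet_Ioo] with u h1 h2 hu
    change aX.mk (quant μ) u ≤ aY.mk (quant ν) u
    rw [← h1, ← h2, quant_le_iff μ u _ hu]
    refine ((quant_le_iff ν u _ hu).1 le_rfl).trans ?_
    rw [ProbabilityTheory.cdf_eq_real, ProbabilityTheory.cdf_eq_real]
    exact hst.2 _
  have c1 := conv_coupling mX mY eX eY
  have c1' : Measure.conv μ ν = (P.prod P).map (fun p => Y p.1 + X p.2) := by
    rw [Measure.conv_comm]; exact conv_coupling mY mX eY eX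
  have c2 := conv_coupling mX mX eX eX
  have c3 := conv_coupling mY mY eY eY
  have key : ∀ {A B : ℝ → ℝ} {m : Measure ℝ}, Measurable A → Measurable B →
      m = (P.prod P).map (fun p => A p.1 + B p.2) → Integrable φ m →
      Integrable (fun p : ℝ × ℝ => φ (A p.1 + B p.2)) (P.prod P) ∧
      ∫ x, φ x ∂m = ∫ p, φ (A p.1 + B p.2) ∂(P.prod P) := by
    intro A B m hA hB hm hi
    have hmm : Measurable (fun p : ℝ × ℝ => A p.1 + B p.2) := by fun_prop
    subst hm
    exact ⟨(integrable_map_measure hcont.aestronglyMeasurable hmm.aemeasurable).1 hi,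
      integral_map hmm.aemeasurable hcont.aestronglyMeasurable⟩
  obtain ⟨j1, k1⟩ := key mX mY c1 i1
  obtain ⟨j1', k1'⟩ := key mY mX c1' i1
  obtain ⟨j2, k2⟩ := key mX mX c2 i2
  obtain ⟨j3, k3⟩ := key mY mY c3 i3
  have hmain : ∫ p, (φ (X p.1 + Y p.2) + φ (Y p.1 + X p.2)) ∂(P.prod P) ≤
      ∫ p, (φ (X p.1 + X p.2) + φ (Y p.1 + Y p.2)) ∂(P.prod P) := by
    refine integral_mono_ae (j1.add j1') (j2.add j3) ?_
    filter_upwards [Measure.quasiMeasurePreserving_fst.ae hle,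
      Measure.quasiMeasurePreserving_snd.ae hle] with p h1 h2
    exact aux_four φ hφ _ _ _ _ (by linarith) (by linarith) (by ring)
  rw [integral_add j1 j1', integral_add j2 j3, ← k1, ← k1', ← k2, ← k3] at hmain
  simp only [ENNReal.toReal_inv, ENNReal.toReal_ofNat, smul_eq_mul]
  linarith

/-- If μ and ν are probability distributions on ℝ with finite first
moments that are comparable in the usual stochastic order, then
μ∗ν ≼ₓ ½(μ∗μ + ν∗ν). -/
theorem stmt1 (μ ν : Measure ℝ) [IsProbabilityMeasure μ] [IsProbabilityMeasure ν]
    (hμ : Integrable (fun x : ℝ => |x|) μ) (hν : Integrable (fun x : ℝ => |x|) ν)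
    (hst : StochOrder μ ν ∨ StochOrder ν μ) :
    ConvexOrder (Measure.conv μ ν)
      ((2 : ENNReal)⁻¹ • (Measure.conv μ μ + Measure.conv ν ν)) := by
  rcases hst with h | h
  · exact stmt1_core μ ν h
  · rw [Measure.conv_comm μ ν, add_comm]
    exact stmt1_core ν μ h
end

section
/- Let μ and ν be two finite Borel measures on ℝ with finite first moments such that μ(ℝ) = ν(ℝ), and let F, G be their distribution functions. Then for every A ∈ ℝ: ∫(x−A)_+ d(μ*μ) + ∫(x−A)_+ d(ν*ν) − 2∫(x−A)_+ d(μ*ν) = ((F−G)*(F−G))(A), where (x−A)_+ = max(x−A, 0). -/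
open MeasureTheory Set

lemma aux_lint (μ ν : Measure ℝ) [IsFiniteMeasure μ] [IsFiniteMeasure ν] (A : ℝ) :
    ∫⁻ z, ENNReal.ofReal (max (z - A) 0) ∂(Measure.conv μ ν) =
      ∫⁻ t, μ (Ioi t) * ν (Ioi (A - t)) := by
  have hpt : ∀ x y : ℝ, ENNReal.ofReal (max (x + y - A) 0) =
      ∫⁻ t, (Ioi t).indicator 1 x * (Ioi (A - t)).indicator 1 y := by
    intro x y
    have : (fun t : ℝ => ((Ioi t).indicator 1 x * (Ioi (A - t)).indicator 1 y : ENNReal)) =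
        (Ioo (A - y) x).indicator 1 := by
      funext t
      simp only [indicator, mem_Ioi, mem_Ioo, Pi.one_apply]
      have : A - t < y ↔ A - y < t := by constructor <;> intro h <;> linarith
      simp only [this]
      by_cases h1 : t < x <;> by_cases h2 : A - y < t <;> simp [h1, h2]
    rw [this, lintegral_indicator_one measurableSet_Ioo, Real.volume_Ioo,
      show x + y - A = x - (A - y) by ring]
    rcases le_total (x - (A - y)) 0 with h | h
    · rw [max_eq_right h, ENNReal.ofReal_of_nonpos h, ENNReal.ofReal_zero]
    · rw [max_eq_left h]
  have m1 : Measurable (fun p : ℝ × ℝ => ((Ioi p.1).indicator 1 p.2 : ENNReal)) := by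
    have : (fun p : ℝ × ℝ => ((Ioi p.1).indicator 1 p.2 : ENNReal)) =
        {p : ℝ × ℝ | p.1 < p.2}.indicator 1 := by
      funext p; simp [indicator]
    rw [this]
    exact measurable_one.indicator (measurableSet_lt measurable_fst measurable_snd)
  have m2 : Measurable (fun p : (ℝ × ℝ) × ℝ => ((Ioi p.2).indicator 1 p.1.1 *
      (Ioi (A - p.2)).indicator 1 p.1.2 : ENNReal)) := by
    have a1 := m1.comp (show Measurable (fun p : (ℝ × ℝ) × ℝ => (p.2, p.1.1)) by fun_prop)
    have a2 := m1.comp (show Measurable (fun p : (ℝ × ℝ) × ℝ => (A - p.2, p.1.2)) by fun_prop)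
    exact a1.mul a2
  rw [Measure.conv, lintegral_map (by fun_prop) (by fun_prop)]
  simp_rw [hpt]
  rw [lintegral_lintegral_swap m2.aemeasurable]
  congr 1
  funext t
  have e1 : Measurable ((Ioi t).indicator (1 : ℝ → ENNReal)) :=
    measurable_one.indicator measurableSet_Ioi
  have e2 : Measurable ((Ioi (A - t)).indicator (1 : ℝ → ENNReal)) :=
    measurable_one.indicator measurableSet_Ioi
  rw [lintegral_prod_mul e1.aemeasurable e2.aemeasurable,
    lintegral_indicator_one measurableSet_Ioi, lintegral_indicator_one measurableSet_Ioi]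

lemma aux_meas (μ : Measure ℝ) : Measurable (fun t : ℝ => μ (Ioi t)) :=
  Antitone.measurable (fun _ _ h => measure_mono (Ioi_subset_Ioi h))

lemma aux_int (μ ν : Measure ℝ) [IsFiniteMeasure μ] [IsFiniteMeasure ν]
    (hμ : Integrable (fun x : ℝ => |x|) μ) (hν : Integrable (fun x : ℝ => |x|) ν) (A : ℝ) :
    Integrable (fun t => μ.real (Ioi t) * ν.real (Ioi (A - t))) ∧
    ∫ z, max (z - A) 0 ∂(Measure.conv μ ν) =
      ∫ t, μ.real (Ioi t) * ν.real (Ioi (A - t)) := by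
  have hm : Measurable (fun t => μ (Ioi t) * ν (Ioi (A - t))) :=
    (aux_meas μ).mul ((aux_meas ν).comp (by fun_prop : Measurable fun t : ℝ => A - t))
  have hr : (fun t => μ.real (Ioi t) * ν.real (Ioi (A - t))) =
      fun t => (μ (Ioi t) * ν (Ioi (A - t))).toReal := by
    funext t; rw [ENNReal.toReal_mul]; rfl
  have hfin : ∫⁻ t, μ (Ioi t) * ν (Ioi (A - t)) ≠ ⊤ := by
    rw [← aux_lint, Measure.conv, lintegral_map (by fun_prop) (by fun_prop)]
    have h1 : Integrable (fun p : ℝ × ℝ => p.1) (μ.prod ν) :=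
      Integrable.comp_fst ((integrable_norm_iff (f := fun x : ℝ => x) (by fun_prop)).1 hμ) ν
    have h2 : Integrable (fun p : ℝ × ℝ => p.2) (μ.prod ν) :=
      Integrable.comp_snd ((integrable_norm_iff (f := fun x : ℝ => x) (by fun_prop)).1 hν) μ
    have h3 : Integrable (fun p : ℝ × ℝ => max (p.1 + p.2 - A) 0) (μ.prod ν) :=
      ((h1.add h2).sub (integrable_const A)).pos_part
    exact h3.lintegral_lt_top.ne
  rw [hr]
  refine ⟨integrable_toReal_of_lintegral_ne_top hm.aemeasurable hfin, ?_⟩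
  rw [integral_eq_lintegral_of_nonneg_ae (f := fun z : ℝ => max (z - A) 0) (ae_of_all _ fun z => le_max_right _ _)
    (by fun_prop), aux_lint, integral_toReal hm.aemeasurable (ae_of_all _ fun t =>
      ENNReal.mul_lt_top (measure_lt_top _ _) (measure_lt_top _ _))]

lemma aux_dist (μ : Measure ℝ) [IsFiniteMeasure μ] (t : ℝ) :
    distFun μ t = μ.real univ - μ.real (Ioi t) := by
  have := measureReal_compl (μ := μ) (measurableSet_Ioi (a := t))
  rw [compl_Ioi] at this
  rw [← this]; rfl

/-- key identity: For finite Borel measures μ, ν on ℝ with finite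
first moments and μ(ℝ) = ν(ℝ), for every A ∈ ℝ,
∫(x−A)₊ d(μ∗μ) + ∫(x−A)₊ d(ν∗ν) − 2∫(x−A)₊ d(μ∗ν) = ((F−G)∗(F−G))(A). -/
theorem stmt2 (μ ν : Measure ℝ) [IsFiniteMeasure μ] [IsFiniteMeasure ν]
    (hμ : Integrable (fun x : ℝ => |x|) μ) (hν : Integrable (fun x : ℝ => |x|) ν)
    (hmass : μ Set.univ = ν Set.univ) :
    ∀ A : ℝ,
      (∫ x, max (x - A) 0 ∂(Measure.conv μ μ)) + (∫ x, max (x - A) 0 ∂(Measure.conv ν ν)) -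
          2 * ∫ x, max (x - A) 0 ∂(Measure.conv μ ν) =
        fconv (fun t => distFun μ t - distFun ν t) (fun t => distFun μ t - distFun ν t) A := by
  intro A
  obtain ⟨i1, e1⟩ := aux_int μ μ hμ hμ A
  obtain ⟨i2, e2⟩ := aux_int ν ν hν hν A
  obtain ⟨i3, e3⟩ := aux_int μ ν hμ hν A
  obtain ⟨i4, e4⟩ := aux_int ν μ hν hμ A
  have hc : ∫ x, max (x - A) 0 ∂(Measure.conv μ ν) = ∫ x, max (x - A) 0 ∂(Measure.conv ν μ) := by
    rw [Measure.conv_comm]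
  have hu : μ.real univ = ν.real univ := by simp [Measure.real, hmass]
  rw [two_mul]
  nth_rewrite 2 [hc]
  rw [e1, e2, e3, e4, ← integral_add' i1 i2, ← integral_add' i3 i4,
    ← integral_sub' (i1.add i2) (i3.add i4)]
  unfold fconv
  congr 1
  funext t
  simp only [aux_dist, hu, Pi.add_apply, Pi.sub_apply]
  ring
end

section
/- Let μ and ν be two finite Borel measures on ℝ with finite first and second moments, and set m̄ = ∫x dμ and n̄ = ∫x dν. Assume μ*ν ≼_cx (1/2)(μ*μ + ν*ν) and let φ: ℝ → ℝ be a twice differentiable convex function such that ∫φ d(μ*μ + ν*ν) and ∫φ d(2μ*ν) are both finite. Then (inf_x φ''(x))·(m̄ − n̄)² ≤ ∫φ d(μ*μ) + ∫φ d(ν*ν) − 2∫φ d(μ*ν) ≤ (sup_x φ''(x))·(m̄ − n̄)², with the conventions ∞·0 = ∞ and (−∞)·0 = −∞. -/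
open MeasureTheory Set

theorem conv_sq_aux (μ ν : Measure ℝ) [IsFiniteMeasure μ] [IsFiniteMeasure ν]
    (hμ1 : Integrable (fun x : ℝ => x) μ) (hν1 : Integrable (fun x : ℝ => x) ν)
    (hμ2 : Integrable (fun x : ℝ => x ^ 2) μ) (hν2 : Integrable (fun x : ℝ => x ^ 2) ν) :
    Integrable (fun x : ℝ => x ^ 2) (Measure.conv μ ν) ∧
    ∫ x, x ^ 2 ∂(Measure.conv μ ν) =
      ν.real univ * (∫ x, x ^ 2 ∂μ) + μ.real univ * (∫ x, x ^ 2 ∂ν)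
        + 2 * ((∫ x, x ∂μ) * ∫ x, x ∂ν) := by
  have hm : Measurable (fun p : ℝ × ℝ => p.1 + p.2) := by fun_prop
  have hs : AEStronglyMeasurable (fun x : ℝ => x ^ 2)
      ((μ.prod ν).map (fun p : ℝ × ℝ => p.1 + p.2)) := by
    exact (by fun_prop : Measurable (fun x : ℝ => x ^ 2)).aestronglyMeasurable
  have h1 : Integrable (fun p : ℝ × ℝ => p.1 ^ 2 * (1 : ℝ)) (μ.prod ν) :=
    hμ2.mul_prod (integrable_const (1 : ℝ))
  have h2 : Integrable (fun p : ℝ × ℝ => (1 : ℝ) * p.2 ^ 2) (μ.prod ν) :=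
    (integrable_const (1 : ℝ)).mul_prod hν2
  have h3 : Integrable (fun p : ℝ × ℝ => p.1 * p.2) (μ.prod ν) := hμ1.mul_prod hν1
  have e : (fun p : ℝ × ℝ => (p.1 + p.2) ^ 2) =
      fun p => (p.1 ^ 2 * (1 : ℝ) + (1 : ℝ) * p.2 ^ 2) + 2 * (p.1 * p.2) := by
    funext p; ring
  have h12 : Integrable (fun p : ℝ × ℝ => p.1 ^ 2 * (1 : ℝ) + (1 : ℝ) * p.2 ^ 2) (μ.prod ν) :=
    h1.add h2
  have h4 : Integrable (fun p : ℝ × ℝ => 2 * (p.1 * p.2)) (μ.prod ν) := h3.const_mul 2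
  have i1 : ∫ p, p.1 ^ 2 * (1 : ℝ) ∂(μ.prod ν) = (∫ x, x ^ 2 ∂μ) * ∫ _x : ℝ, (1 : ℝ) ∂ν :=
    integral_prod_mul (fun x : ℝ => x ^ 2) (fun _ : ℝ => (1 : ℝ))
  have i2 : ∫ p, (1 : ℝ) * p.2 ^ 2 ∂(μ.prod ν) = (∫ _x : ℝ, (1 : ℝ) ∂μ) * ∫ x, x ^ 2 ∂ν :=
    integral_prod_mul (fun _ : ℝ => (1 : ℝ)) (fun x : ℝ => x ^ 2)
  have i3 : ∫ p, p.1 * p.2 ∂(μ.prod ν) = (∫ x, x ∂μ) * ∫ x, x ∂ν :=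
    integral_prod_mul (fun x : ℝ => x) (fun x : ℝ => x)
  constructor
  · unfold Measure.conv
    rw [integrable_map_measure hs hm.aemeasurable]
    change Integrable (fun p : ℝ × ℝ => (p.1 + p.2) ^ 2) (μ.prod ν)
    rw [e]
    exact h12.add h4
  · unfold Measure.conv
    rw [integral_map hm.aemeasurable hs, e, integral_add h12 h4, integral_add h1 h2,
      i1, i2, integral_const_mul, i3]
    simp
    ring

theorem cx_use_aux (ρ σ τ : Measure ℝ)
    (hcx : ConvexOrder ρ ((2 : ENNReal)⁻¹ • (σ + τ)))
    (ψ : ℝ → ℝ) (hψ : ConvexOn ℝ univ ψ) (h1 : Integrable ψ σ) (h2 : Integrable ψ τ)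
    (h3 : Integrable ψ ρ) :
    2 * ∫ x, ψ x ∂ρ ≤ (∫ x, ψ x ∂σ) + ∫ x, ψ x ∂τ := by
  have h := hcx ψ hψ h3 ((h1.add_measure h2).smul_measure (by simp))
  rw [integral_smul_measure, integral_add_measure h1 h2] at h
  simp at h
  linarith

theorem convex_aux (f f' f'' : ℝ → ℝ) (h1 : ∀ x, HasDerivAt f (f' x) x)
    (h2 : ∀ x, HasDerivAt f' (f'' x) x) (h : ∀ x, 0 ≤ f'' x) : ConvexOn ℝ univ f := by
  have hd : deriv f = f' := funext fun x => (h1 x).deriv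
  apply Monotone.convexOn_univ_of_deriv (fun x => (h1 x).differentiableAt)
  rw [hd]
  exact monotone_of_deriv_nonneg (fun x => (h2 x).differentiableAt)
    (fun x => by rw [(h2 x).deriv]; exact h x)

/-- Proposition: bounds for the Jensen-type gap in terms of bounds
on φ''.  The statement "inf φ'' · (m̄−n̄)² ≤ gap ≤ sup φ'' · (m̄−n̄)²" (with the
conventions ∞·0 = ∞ and (−∞)·0 = −∞) is expressed by quantifying over all real
lower/upper bounds of φ''. -/
theorem stmt4 (μ ν : Measure ℝ) [IsFiniteMeasure μ] [IsFiniteMeasure ν]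
    (hμ1 : Integrable (fun x : ℝ => |x|) μ) (hν1 : Integrable (fun x : ℝ => |x|) ν)
    (hμ2 : Integrable (fun x : ℝ => x ^ 2) μ) (hν2 : Integrable (fun x : ℝ => x ^ 2) ν)
    (hcx : ConvexOrder (Measure.conv μ ν)
      ((2 : ENNReal)⁻¹ • (Measure.conv μ μ + Measure.conv ν ν)))
    (φ φ' φ'' : ℝ → ℝ)
    (hd1 : ∀ x, HasDerivAt φ (φ' x) x) (hd2 : ∀ x, HasDerivAt φ' (φ'' x) x)
    (hφ : ConvexOn ℝ Set.univ φ)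
    (hi1 : Integrable φ (Measure.conv μ μ)) (hi2 : Integrable φ (Measure.conv ν ν))
    (hi3 : Integrable φ (Measure.conv μ ν)) :
    (∀ c : ℝ, (∀ x, c ≤ φ'' x) →
        c * ((∫ x, x ∂μ) - ∫ x, x ∂ν) ^ 2 ≤
          (∫ x, φ x ∂(Measure.conv μ μ)) + (∫ x, φ x ∂(Measure.conv ν ν)) -
            2 * ∫ x, φ x ∂(Measure.conv μ ν)) ∧
      (∀ C : ℝ, (∀ x, φ'' x ≤ C) →
        (∫ x, φ x ∂(Measure.conv μ μ)) + (∫ x, φ x ∂(Measure.conv ν ν)) -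
            2 * ∫ x, φ x ∂(Measure.conv μ ν) ≤
          C * ((∫ x, x ∂μ) - ∫ x, x ∂ν) ^ 2) := by
  have hμ1' : Integrable (fun x : ℝ => x) μ :=
    (integrable_norm_iff (by fun_prop)).1 hμ1
  have hν1' : Integrable (fun x : ℝ => x) ν :=
    (integrable_norm_iff (by fun_prop)).1 hν1
  obtain ⟨q1, e1⟩ := conv_sq_aux μ μ hμ1' hμ1' hμ2 hμ2
  obtain ⟨q2, e2⟩ := conv_sq_aux ν ν hν1' hν1' hν2 hν2
  obtain ⟨q3, e3⟩ := conv_sq_aux μ ν hμ1' hν1' hμ2 hν2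
  have mass : ∀ (α β : Measure ℝ) [IsFiniteMeasure α] [IsFiniteMeasure β],
      (Measure.conv α β).real univ = α.real univ * β.real univ := by
    intro α β _ _
    unfold Measure.conv
    rw [map_measureReal_apply (by fun_prop) MeasurableSet.univ, preimage_univ, ← univ_prod_univ,
      measureReal_prod_prod]
  have hab : μ.real univ = ν.real univ := by
    have h := cx_use_aux _ _ _ hcx (fun _ => (-1 : ℝ)) (convexOn_const _ convex_univ)
      (integrable_const _) (integrable_const _) (integrable_const _)
    simp only [integral_const, mass, smul_eq_mul] at h
    have : (μ.real univ - ν.real univ) ^ 2 ≤ 0 := by nlinarith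
    have := pow_eq_zero_iff (two_ne_zero) |>.1 (le_antisymm this (sq_nonneg _))
    linarith
  have key : (∫ x, x ^ 2 ∂(Measure.conv μ μ)) + (∫ x, x ^ 2 ∂(Measure.conv ν ν)) -
      2 * ∫ x, x ^ 2 ∂(Measure.conv μ ν) = 2 * ((∫ x, x ∂μ) - ∫ x, x ∂ν) ^ 2 := by
    rw [e1, e2, e3, hab]; ring
  have hq : ∀ c x : ℝ, HasDerivAt (fun x : ℝ => c / 2 * x ^ 2) (c * x) x := by
    intro c x
    have h := (hasDerivAt_pow 2 x).const_mul (c / 2)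
    have e : c / 2 * (((2 : ℕ) : ℝ) * x ^ (2 - 1)) = c * x := by norm_num; ring
    rw [e] at h
    exact h
  have hl : ∀ c x : ℝ, HasDerivAt (fun x : ℝ => c * x) c x := by
    intro c x
    simpa using (hasDerivAt_id x).const_mul c
  constructor
  · intro c hc
    have h := cx_use_aux _ _ _ hcx (fun x => φ x - c / 2 * x ^ 2)
      (convex_aux _ (fun x => φ' x - c * x) (fun x => φ'' x - c)
        (fun x => (hd1 x).sub (hq c x)) (fun x => (hd2 x).sub (hl c x))
        (fun x => sub_nonneg.2 (hc x)))
      (hi1.sub (q1.const_mul _)) (hi2.sub (q2.const_mul _)) (hi3.sub (q3.const_mul _))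
    rw [integral_sub hi1 (q1.const_mul _), integral_sub hi2 (q2.const_mul _),
      integral_sub hi3 (q3.const_mul _), integral_const_mul, integral_const_mul,
      integral_const_mul] at h
    have := congrArg (fun t => c / 2 * t) key
    linarith
  · intro c hc
    have h := cx_use_aux _ _ _ hcx (fun x => c / 2 * x ^ 2 - φ x)
      (convex_aux _ (fun x => c * x - φ' x) (fun x => c - φ'' x)
        (fun x => (hq c x).sub (hd1 x)) (fun x => (hl c x).sub (hd2 x))
        (fun x => sub_nonneg.2 (hc x)))
      ((q1.const_mul _).sub hi1) ((q2.const_mul _).sub hi2) ((q3.const_mul _).sub hi3)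
    rw [integral_sub (q1.const_mul _) hi1, integral_sub (q2.const_mul _) hi2,
      integral_sub (q3.const_mul _) hi3, integral_const_mul, integral_const_mul,
      integral_const_mul] at h
    have := congrArg (fun t => c / 2 * t) key
    linarith
end

section
/- Let μ and ν be discrete probability distributions concentrated on the non-negative integers, with a_k = μ({k}) and b_k = ν({k}) for k = 0,1,2,…, both having finite first moments. Let F, G be the distribution functions of μ and ν. Then the following are equivalent: (1) for all convex functions φ: ℝ → ℝ, Σ_{i=0}^∞ Σ_{j=0}^∞ (a_i a_j + b_i b_j) φ(i+j) ≥ Σ_{i=0}^∞ Σ_{j=0}^∞ 2 a_i b_j φ(i+j); (2) ((F−G)*(F−G))(x) ≥ 0 for every x ∈ ℝ; (3) for every i ∈ ℕ, the discrete convolution Σ_{j=0}^{i} (G−F)(j)·(G−F)(i−j) ≥ 0. -/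
open MeasureTheory Set

lemma hs_congr {ι : Type*} {f g : ι → ℝ} {x y : ℝ} (h : HasSum f x) (hfg : ∀ p, g p = f p)
    (hxy : y = x) : HasSum g y := by
  have : g = f := funext hfg
  rw [this, hxy]; exact h

lemma hasSum_conc (μ : Measure ℝ) [IsProbabilityMeasure μ] (a : ℕ → ℝ)
    (hμc : μ (Set.range (fun k : ℕ => (k : ℝ)))ᶜ = 0)
    (ha : ∀ k : ℕ, a k = (μ {(k : ℝ)}).toReal) (f : ℝ → ℝ) (hf : Integrable f μ) :
    HasSum (fun k : ℕ => a k * f k) (∫ x, f x ∂μ) := by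
  have h := hasSum_integral_iUnion (μ := μ) (f := f) (s := fun k : ℕ => ({(k : ℝ)} : Set ℝ))
    (fun k => measurableSet_singleton _)
    (by
      intro i j hij
      simp only [Function.onFun, Set.disjoint_singleton]
      exact_mod_cast hij) hf.integrableOn
  have h2 : ∫ x in ⋃ k : ℕ, ({(k : ℝ)} : Set ℝ), f x ∂μ = ∫ x, f x ∂μ := by
    have : (⋃ k : ℕ, ({(k : ℝ)} : Set ℝ)) = Set.range (fun k : ℕ => (k : ℝ)) := by
      ext x; simp [eq_comm]
    rw [this]
    have h3 : μ.restrict (Set.range (fun k : ℕ => (k : ℝ))) = μ :=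
      Measure.restrict_eq_self_of_ae_mem (by rw [ae_iff]; exact hμc)
    rw [h3]
  rw [h2] at h
  refine hs_congr h (fun k => ?_) rfl
  rw [integral_singleton, ha, Measure.real, smul_eq_mul]

lemma distFun_sum (μ : Measure ℝ) [IsProbabilityMeasure μ] (a : ℕ → ℝ)
    (hμc : μ (Set.range (fun k : ℕ => (k : ℝ)))ᶜ = 0)
    (ha : ∀ k : ℕ, a k = (μ {(k : ℝ)}).toReal) (s : ℕ) :
    HasSum (fun k : ℕ => if k ≤ s then a k else 0) (distFun μ s) := by
  have h := hasSum_conc μ a hμc ha (Set.indicator (Set.Iic (s : ℝ)) 1)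
    ((integrable_const (1 : ℝ)).indicator measurableSet_Iic)
  rw [integral_indicator_one measurableSet_Iic] at h
  refine hs_congr h (fun k => ?_) rfl
  by_cases hk : k ≤ s <;> simp [Set.indicator, hk]

lemma distFun_floor (μ : Measure ℝ) 
    (hμc : μ (Set.range (fun k : ℕ => (k : ℝ)))ᶜ = 0) (t : ℝ) :
    distFun μ t = if 0 ≤ t then distFun μ (⌊t⌋₊ : ℝ) else 0 := by
  have hae : ∀ᵐ x ∂μ, x ∈ Set.range (fun k : ℕ => (k : ℝ)) := by rw [ae_iff]; exact hμc
  split_ifs with ht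
  · unfold distFun
    congr 1
    apply measure_congr
    filter_upwards [hae] with x hx
    obtain ⟨k, rfl⟩ := hx
    apply propext
    change (k : ℝ) ≤ t ↔ (k : ℝ) ≤ (⌊t⌋₊ : ℝ)
    rw [← Nat.le_floor_iff ht]; exact_mod_cast Iff.rfl
  · unfold distFun
    have : μ (Set.Iic t) = μ (∅ : Set ℝ) := by
      apply measure_congr
      filter_upwards [hae] with x hx
      obtain ⟨k, rfl⟩ := hx
      apply propext
      change (k : ℝ) ≤ t ↔ False
      have : (0 : ℝ) ≤ k := Nat.cast_nonneg k
      simp; linarith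
    rw [this]; simp

/-- the tent function -/
noncomputable def tent (y : ℝ) : ℝ := max 0 (1 - |y - 1|)

lemma tent_integral (x : ℝ) (i j : ℕ) :
    Integrable (fun t : ℝ => (Set.Ico (i : ℝ) (i + 1)).indicator (1 : ℝ → ℝ) t *
      (Set.Ico (j : ℝ) (j + 1)).indicator (1 : ℝ → ℝ) (x - t)) ∧
    ∫ t : ℝ, (Set.Ico (i : ℝ) (i + 1)).indicator (1 : ℝ → ℝ) t *
      (Set.Ico (j : ℝ) (j + 1)).indicator (1 : ℝ → ℝ) (x - t) = tent (x - (i + j : ℕ)) := by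
  have h1 : (fun t : ℝ => (Set.Ico (i : ℝ) (i + 1)).indicator (1 : ℝ → ℝ) t *
      (Set.Ico (j : ℝ) (j + 1)).indicator (1 : ℝ → ℝ) (x - t)) =
      (Set.Ico (i : ℝ) (i + 1) ∩ Set.Ioc (x - j - 1) (x - j)).indicator 1 := by
    funext t
    have : (Set.Ico (j : ℝ) (j + 1)).indicator (1 : ℝ → ℝ) (x - t) =
        (Set.Ioc (x - j - 1) (x - j)).indicator (1 : ℝ → ℝ) t := by
      have : x - t ∈ Set.Ico (j : ℝ) (j + 1) ↔ t ∈ Set.Ioc (x - j - 1) (x - j) := by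
        simp only [Set.mem_Ico, Set.mem_Ioc]
        constructor <;> rintro ⟨h1, h2⟩ <;> constructor <;> linarith
      classical
      simp only [Set.indicator_apply, this, Pi.one_apply]
    rw [this, Set.inter_indicator_one]; rfl
  have hm : MeasurableSet (Set.Ico (i : ℝ) (i + 1) ∩ Set.Ioc (x - j - 1) (x - j)) :=
    measurableSet_Ico.inter measurableSet_Ioc
  rw [h1]
  constructor
  · apply (integrable_indicator_iff hm).2
    refine integrableOn_const ?_ (by simp)
    exact ((measure_mono Set.inter_subset_left).trans_lt (by simp)).ne
  · rw [integral_indicator_one hm]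
    have : volume.real (Set.Ico (i : ℝ) (i + 1) ∩ Set.Ioc (x - j - 1) (x - j)) =
        volume.real (Set.Ioc (i : ℝ) (i + 1) ∩ Set.Ioc (x - j - 1) (x - j)) :=
      measureReal_congr (Ico_ae_eq_Ioc.inter (ae_eq_refl _))
    rw [this, Set.Ioc_inter_Ioc, Real.volume_real_Ioc, tent]
    push_cast
    rcases le_total (i : ℝ) (x - j - 1) with h | h
    · rw [max_eq_right h, min_eq_left (by linarith), abs_of_nonneg (by linarith), max_comm]
      congr 1; ring
    · rw [max_eq_left h, min_eq_right (by linarith), abs_of_nonpos (by linarith), max_comm]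
      congr 1; ring

lemma fconv_formula (H : ℝ → ℝ) (d : ℕ → ℝ)
    (hH : ∀ t, H t = if 0 ≤ t then d ⌊t⌋₊ else 0) (x : ℝ) :
    fconv H H x = ∑ n ∈ Finset.range (⌊x⌋₊ + 1),
      (∑ j ∈ Finset.range (n + 1), d j * d (n - j)) * tent (x - n) := by
  have key : ∀ t, H t * H (x - t) = ∑ n ∈ Finset.range (⌊x⌋₊ + 1),
      ∑ j ∈ Finset.range (n + 1), d j * d (n - j) *
        ((Set.Ico (j : ℝ) (j + 1)).indicator (1 : ℝ → ℝ) t *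
      (Set.Ico ((n - j : ℕ) : ℝ) ((n - j : ℕ) + 1)).indicator (1 : ℝ → ℝ) (x - t)) := by
    intro t
    have hneg : ∀ s : ℝ, s < 0 → ∀ j : ℕ,
        (Set.Ico (j : ℝ) (j + 1)).indicator (1 : ℝ → ℝ) s = 0 := by
      intro s hs j
      apply Set.indicator_of_notMem
      rintro ⟨h, -⟩
      have : (0 : ℝ) ≤ j := Nat.cast_nonneg j
      linarith
    have hpos : ∀ s : ℝ, 0 ≤ s → ∀ j : ℕ,
        (Set.Ico (j : ℝ) (j + 1)).indicator (1 : ℝ → ℝ) s = if j = ⌊s⌋₊ then 1 else 0 := by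
      intro s hs j
      have : s ∈ Set.Ico (j : ℝ) (j + 1) ↔ j = ⌊s⌋₊ := by
        rw [eq_comm, Nat.floor_eq_iff hs]; rfl
      classical
      simp only [Set.indicator_apply, this, Pi.one_apply]
    rcases lt_or_ge t 0 with h1 | h1
    · rw [hH t, if_neg (not_le.2 h1)]
      simp [hneg t h1]
    rcases lt_or_ge (x - t) 0 with h2 | h2
    · rw [hH (x - t), if_neg (not_le.2 h2)]
      simp [hneg _ h2]
    rw [hH t, hH (x - t), if_pos h1, if_pos h2]
    simp only [hpos _ h1, hpos _ h2]
    have hle : ⌊t⌋₊ + ⌊x - t⌋₊ ≤ ⌊x⌋₊ := by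
      apply Nat.le_floor
      push_cast
      linarith [Nat.floor_le h1, Nat.floor_le h2]
    rw [Finset.sum_eq_single (⌊t⌋₊ + ⌊x - t⌋₊), Finset.sum_eq_single ⌊t⌋₊]
    · simp
    · intro j _ hj; simp [hj]
    · intro h; exact absurd (Finset.mem_range.2 (by omega)) h
    · intro n hn hne
      apply Finset.sum_eq_zero
      intro j hj
      have := Finset.mem_range.1 hj
      by_cases hj1 : j = ⌊t⌋₊
      · have : ¬ (n - j = ⌊x - t⌋₊) := by omega
        simp [this]
      · simp [hj1]
    · intro h; exact absurd (Finset.mem_range.2 (by omega)) h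
  unfold fconv
  simp only [key]
  rw [integral_finsetSum]
  · apply Finset.sum_congr rfl
    intro n hn
    rw [integral_finsetSum, Finset.sum_mul]
    · apply Finset.sum_congr rfl
      intro j hj
      have := Finset.mem_range.1 hj
      rw [integral_const_mul, (tent_integral x j (n - j)).2]
      congr 4; omega
    · intro j _
      exact (tent_integral x j (n - j)).1.const_mul _
  · intro n _
    apply integrable_finsetSum
    intro j _
    exact (tent_integral x j (n - j)).1.const_mul _

lemma two_iff_three (H : ℝ → ℝ) (d : ℕ → ℝ)
    (hH : ∀ t, H t = if 0 ≤ t then d ⌊t⌋₊ else 0) :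
    (∀ x, 0 ≤ fconv H H x) ↔ ∀ i : ℕ, 0 ≤ ∑ j ∈ Finset.range (i + 1), d j * d (i - j) := by
  constructor
  · intro h m
    have := h ((m + 1 : ℕ) : ℝ)
    rw [fconv_formula H d hH, Nat.floor_natCast, Finset.sum_eq_single m] at this
    · simpa [tent] using this
    · intro n _ hn
      have : tent (((m + 1 : ℕ) : ℝ) - n) = 0 := by
        unfold tent
        apply max_eq_left
        push_cast
        have h1 : (m : ℤ) - n ≠ 0 := by omega
        have h2 : (1 : ℤ) ≤ |(m : ℤ) - n| := Int.one_le_abs h1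
        have h3 : (1 : ℝ) ≤ |(m : ℝ) - n| := by exact_mod_cast h2
        have h4 : (m : ℝ) + 1 - n - 1 = m - n := by ring
        rw [h4]; linarith
      rw [this, mul_zero]
    · intro h; exact absurd (Finset.mem_range.2 (by omega)) h
  · intro h x
    rw [fconv_formula H d hH]
    exact Finset.sum_nonneg fun n _ => mul_nonneg (h n) (le_max_left _ _)

lemma hasSum_prod {f g : ℕ → ℝ} {x y : ℝ} (hf : HasSum f x) (hg : HasSum g y)
    (hf0 : ∀ i, 0 ≤ f i) (hg0 : ∀ i, 0 ≤ g i) :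
    HasSum (fun p : ℕ × ℕ => f p.1 * g p.2) (x * y) :=
  hf.mul hg (hf.summable.mul_of_nonneg hg.summable hf0 hg0)

section core
variable {a b : ℕ → ℝ} {A B : ℕ → ℝ} {M M' : ℝ}

lemma hasSum_const {a b : ℕ → ℝ} (ha0 : ∀ i, 0 ≤ a i) (hb0 : ∀ i, 0 ≤ b i)
    (ha : HasSum a 1) (hb : HasSum b 1) :
    HasSum (fun p : ℕ × ℕ => a p.1 * a p.2 + b p.1 * b p.2) 2 ∧
    HasSum (fun p : ℕ × ℕ => 2 * a p.1 * b p.2) 2 := by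
  constructor
  · refine hs_congr ((hasSum_prod ha ha ha0 ha0).add (hasSum_prod hb hb hb0 hb0)) (fun p => ?_) ?_
    · rfl
    · norm_num
  · refine hs_congr ((hasSum_prod ha hb ha0 hb0).mul_left 2) (fun p => ?_) ?_
    · ring
    · norm_num

lemma hasSum_lin {a b : ℕ → ℝ} {M M' : ℝ} (ha0 : ∀ i, 0 ≤ a i) (hb0 : ∀ i, 0 ≤ b i)
    (ha : HasSum a 1) (hb : HasSum b 1)
    (hM : HasSum (fun i => a i * i) M) (hM' : HasSum (fun i => b i * i) M') :
    HasSum (fun p : ℕ × ℕ => (a p.1 * a p.2 + b p.1 * b p.2) * ((p.1 + p.2 : ℕ) : ℝ))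
      (2 * M + 2 * M') ∧
    HasSum (fun p : ℕ × ℕ => 2 * a p.1 * b p.2 * ((p.1 + p.2 : ℕ) : ℝ)) (2 * M + 2 * M') := by
  have ha1 : ∀ i : ℕ, 0 ≤ a i * i := fun i => mul_nonneg (ha0 i) (Nat.cast_nonneg i)
  have hb1 : ∀ i : ℕ, 0 ≤ b i * i := fun i => mul_nonneg (hb0 i) (Nat.cast_nonneg i)
  constructor
  · refine hs_congr (((hasSum_prod hM ha ha1 ha0).add (hasSum_prod ha hM ha0 ha1)).add
      ((hasSum_prod hM' hb hb1 hb0).add (hasSum_prod hb hM' hb0 hb1))) (fun p => ?_) ?_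
    · push_cast; ring
    · ring
  · refine hs_congr (((hasSum_prod hM hb ha1 hb0).add (hasSum_prod ha hM' ha0 hb1)).mul_left 2) (fun p => ?_) ?_
    · push_cast; ring
    · ring

lemma count_eq (m i j : ℕ) : (((m + 1) - (i + j) : ℕ) : ℝ) =
    ∑ s ∈ Finset.range (m + 1), (if i ≤ s then (1 : ℝ) else 0) * (if j ≤ m - s then 1 else 0) := by
  have : ∀ s ∈ Finset.range (m + 1), (if i ≤ s then (1 : ℝ) else 0) *
      (if j ≤ m - s then 1 else 0) = if s ∈ Finset.Ico i (m + 1 - j) then 1 else 0 := by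
    intro s hs
    have := Finset.mem_range.1 hs
    by_cases h1 : i ≤ s <;> by_cases h2 : j ≤ m - s <;> simp [h1, h2] <;> omega
  rw [Finset.sum_congr rfl this, ← Finset.sum_filter, Finset.sum_const, nsmul_one]
  have h2 : (Finset.range (m + 1)).filter (fun s => s ∈ Finset.Ico i (m + 1 - j)) =
      Finset.Ico i (m + 1 - j) := by
    ext s; simp; omega
  rw [h2, Nat.card_Ico]
  congr 1; omega

lemma hasSum_put {a b A B : ℕ → ℝ} (ha0 : ∀ i, 0 ≤ a i) (hb0 : ∀ i, 0 ≤ b i)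
    (hA : ∀ s, HasSum (fun k : ℕ => if k ≤ s then a k else 0) (A s))
    (hB : ∀ s, HasSum (fun k : ℕ => if k ≤ s then b k else 0) (B s)) (m : ℕ) :
    HasSum (fun p : ℕ × ℕ => (a p.1 * a p.2 + b p.1 * b p.2) * ((m + 1 - (p.1 + p.2) : ℕ) : ℝ))
      (∑ s ∈ Finset.range (m + 1), (A s * A (m - s) + B s * B (m - s))) ∧
    HasSum (fun p : ℕ × ℕ => 2 * a p.1 * b p.2 * ((m + 1 - (p.1 + p.2) : ℕ) : ℝ))
      (∑ s ∈ Finset.range (m + 1), 2 * (A s * B (m - s))) := by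
  have ha1 : ∀ s k : ℕ, 0 ≤ if k ≤ s then a k else 0 := by
    intro s k; split_ifs; exacts [ha0 k, le_rfl]
  have hb1 : ∀ s k : ℕ, 0 ≤ if k ≤ s then b k else 0 := by
    intro s k; split_ifs; exacts [hb0 k, le_rfl]
  constructor
  · refine hs_congr (hasSum_sum (s := Finset.range (m + 1)) (fun s _ =>
      (hasSum_prod (hA s) (hA (m - s)) (ha1 _) (ha1 _)).add
      (hasSum_prod (hB s) (hB (m - s)) (hb1 _) (hb1 _)))) (fun p => ?_) ?_
    · rw [count_eq, Finset.mul_sum]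
      apply Finset.sum_congr rfl
      intro s _
      split_ifs <;> ring
    · rfl
  · refine hs_congr (hasSum_sum (s := Finset.range (m + 1)) (fun s _ =>
      (hasSum_prod (hA s) (hB (m - s)) (ha1 _) (hb1 _)).mul_left 2)) (fun p => ?_) ?_
    · rw [count_eq, Finset.mul_sum]
      apply Finset.sum_congr rfl
      intro s _
      split_ifs <;> ring
    · rfl

lemma conv_identity (A B : ℕ → ℝ) (m : ℕ) :
    ∑ s ∈ Finset.range (m + 1), (A s * A (m - s) + B s * B (m - s)) -
      ∑ s ∈ Finset.range (m + 1), 2 * (A s * B (m - s)) =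
    ∑ s ∈ Finset.range (m + 1), (B s - A s) * (B (m - s) - A (m - s)) := by
  have h : ∑ s ∈ Finset.range (m + 1), A s * B (m - s) =
      ∑ s ∈ Finset.range (m + 1), B s * A (m - s) := by
    rw [← Finset.sum_range_reflect]
    apply Finset.sum_congr rfl
    intro s hs
    have := Finset.mem_range.1 hs
    have h1 : m + 1 - 1 - s = m - s := by omega
    have h2 : m - (m - s) = s := by omega
    rw [h1, h2, mul_comm]
  have h3 : ∑ s ∈ Finset.range (m + 1), 2 * (A s * B (m - s)) =
      ∑ s ∈ Finset.range (m + 1), (A s * B (m - s) + B s * A (m - s)) := by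
    rw [Finset.sum_add_distrib, ← h, ← Finset.mul_sum]; ring
  rw [h3, ← Finset.sum_sub_distrib]
  apply Finset.sum_congr rfl
  intro s _
  ring

/-- expansion of a sequence through its second differences -/
lemma expand (f : ℕ → ℝ) (n : ℕ) : f n = f 0 + n * (f 1 - f 0) +
    ∑ k ∈ Finset.range n, (f k - 2 * f (k + 1) + f (k + 2)) * ((n - (k + 1) : ℕ) : ℝ) := by
  have tel : ∀ n : ℕ, ∑ k ∈ Finset.range n, (f k - 2 * f (k + 1) + f (k + 2)) =
      f (n + 1) - f n - (f 1 - f 0) := by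
    intro n
    induction n with
    | zero => simp
    | succ n ih => rw [Finset.sum_range_succ, ih]; ring
  induction n with
  | zero => simp
  | succ n ih =>
    have h1 : ∑ k ∈ Finset.range (n + 1),
        (f k - 2 * f (k + 1) + f (k + 2)) * ((n + 1 - (k + 1) : ℕ) : ℝ) =
        ∑ k ∈ Finset.range n, (f k - 2 * f (k + 1) + f (k + 2)) * ((n - (k + 1) : ℕ) : ℝ) +
        ∑ k ∈ Finset.range n, (f k - 2 * f (k + 1) + f (k + 2)) := by
      rw [Finset.sum_range_succ, ← Finset.sum_add_distrib]
      simp only [Nat.sub_self, Nat.cast_zero, mul_zero, add_zero]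
      apply Finset.sum_congr rfl
      intro k hk
      have := Finset.mem_range.1 hk
      have h2 : n + 1 - (k + 1) = (n - (k + 1)) + 1 := by omega
      rw [h2]; push_cast; ring
    rw [h1, tel]
    push_cast
    linarith

lemma convex_second {φ : ℝ → ℝ} (hφ : ConvexOn ℝ Set.univ φ) (k : ℕ) :
    0 ≤ φ (k : ℕ) - 2 * φ ((k + 1 : ℕ) : ℝ) + φ ((k + 2 : ℕ) : ℝ) := by
  have h := hφ.2 (Set.mem_univ (k : ℝ)) (Set.mem_univ ((k + 2 : ℕ) : ℝ))
    (show (0 : ℝ) ≤ 1 / 2 by norm_num) (show (0 : ℝ) ≤ 1 / 2 by norm_num) (by norm_num)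
  have h2 : (1 / 2 : ℝ) • (k : ℝ) + (1 / 2 : ℝ) • ((k + 2 : ℕ) : ℝ) = ((k + 1 : ℕ) : ℝ) := by
    simp only [smul_eq_mul]; push_cast; ring
  rw [h2] at h
  simp only [smul_eq_mul] at h
  linarith

end core

lemma one_iff_three {a b A B : ℕ → ℝ} {M M' : ℝ} (ha0 : ∀ i, 0 ≤ a i) (hb0 : ∀ i, 0 ≤ b i)
    (ha : HasSum a 1) (hb : HasSum b 1)
    (hM : HasSum (fun i => a i * i) M) (hM' : HasSum (fun i => b i * i) M')
    (hA : ∀ s, HasSum (fun k : ℕ => if k ≤ s then a k else 0) (A s))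
    (hB : ∀ s, HasSum (fun k : ℕ => if k ≤ s then b k else 0) (B s)) :
    (∀ φ : ℝ → ℝ, ConvexOn ℝ Set.univ φ →
        Summable (fun p : ℕ × ℕ => (a p.1 * a p.2 + b p.1 * b p.2) * φ ((p.1 : ℝ) + p.2)) →
        Summable (fun p : ℕ × ℕ => 2 * a p.1 * b p.2 * φ ((p.1 : ℝ) + p.2)) →
        ∑' p : ℕ × ℕ, 2 * a p.1 * b p.2 * φ ((p.1 : ℝ) + p.2) ≤
          ∑' p : ℕ × ℕ, (a p.1 * a p.2 + b p.1 * b p.2) * φ ((p.1 : ℝ) + p.2)) ↔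
    ∀ i : ℕ, 0 ≤ ∑ j ∈ Finset.range (i + 1), (B j - A j) * (B (i - j) - A (i - j)) := by
  constructor
  · intro h m
    have hput := hasSum_put ha0 hb0 hA hB m
    have hc : ConvexOn ℝ Set.univ (fun x : ℝ => max ((m : ℝ) + 1 - x) 0) := by
      refine ConvexOn.sup ?_ (convexOn_const 0 convex_univ)
      exact (convexOn_const _ convex_univ).sub (concaveOn_id convex_univ)
    have hval : ∀ i j : ℕ, max ((m : ℝ) + 1 - ((i : ℝ) + j)) 0 = ((m + 1 - (i + j) : ℕ) : ℝ) := by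
      intro i j
      rcases le_total (i + j) (m + 1) with hle | hle
      · rw [Nat.cast_sub hle, max_eq_left]
        · push_cast; ring
        · have : ((i + j : ℕ) : ℝ) ≤ ((m + 1 : ℕ) : ℝ) := by exact_mod_cast hle
          push_cast at this; linarith
      · rw [Nat.sub_eq_zero_of_le hle, max_eq_right]
        · simp
        · have : ((m + 1 : ℕ) : ℝ) ≤ ((i + j : ℕ) : ℝ) := by exact_mod_cast hle
          push_cast at this; linarith
    have h1 := h _ hc
    simp only [hval] at h1
    have h2 := h1 hput.1.summable hput.2.summable
    rw [hput.1.tsum_eq, hput.2.tsum_eq] at h2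
    rw [← conv_identity]
    linarith
  · intro h φ hφ hs1 hs2
    have hcast : ∀ p : ℕ × ℕ, φ ((p.1 : ℝ) + p.2) = φ ((p.1 + p.2 : ℕ) : ℝ) := by
      intro p; push_cast; rfl
    simp only [hcast] at hs1 hs2 ⊢
    set f : ℕ → ℝ := fun n => φ (n : ℝ) with hf
    change Summable (fun p : ℕ × ℕ => (a p.1 * a p.2 + b p.1 * b p.2) * f (p.1 + p.2)) at hs1
    change Summable (fun p : ℕ × ℕ => 2 * a p.1 * b p.2 * f (p.1 + p.2)) at hs2
    change ∑' p : ℕ × ℕ, 2 * a p.1 * b p.2 * f (p.1 + p.2) ≤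
      ∑' p : ℕ × ℕ, (a p.1 * a p.2 + b p.1 * b p.2) * f (p.1 + p.2)
    set w : ℕ → ℝ := fun k => f k - 2 * f (k + 1) + f (k + 2) with hw
    have hw0 : ∀ k, 0 ≤ w k := fun k => convex_second hφ k
    have hexp : ∀ n, f n = f 0 + n * (f 1 - f 0) +
      ∑ k ∈ Finset.range n, w k * ((n - (k + 1) : ℕ) : ℝ) := expand f
    set ψ : ℕ → ℝ := fun n => ∑ k ∈ Finset.range n, w k * ((n - (k + 1) : ℕ) : ℝ) with hψ
    set P : ℕ → ℕ → ℝ := fun N n => ∑ k ∈ Finset.range N, w k * ((n - (k + 1) : ℕ) : ℝ) with hP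
    have hP0 : ∀ N n, 0 ≤ P N n := fun N n =>
      Finset.sum_nonneg fun k _ => mul_nonneg (hw0 k) (Nat.cast_nonneg _)
    have hPlarge : ∀ N n, n ≤ N → P N n = ψ n := by
      intro N n hn
      symm
      apply Finset.sum_subset (Finset.range_mono hn)
      intro k _ hk
      have : n - (k + 1) = 0 := by have := Finset.mem_range.not.1 hk; omega
      rw [this]; simp
    have hPle : ∀ N n, P N n ≤ ψ n := by
      intro N n
      rcases le_total n N with hn | hn
      · exact (hPlarge N n hn).le
      · exact Finset.sum_le_sum_of_subset_of_nonneg (Finset.range_mono hn)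
          fun k _ _ => mul_nonneg (hw0 k) (Nat.cast_nonneg _)
    have hcst := hasSum_const ha0 hb0 ha hb
    have hlin := hasSum_lin ha0 hb0 ha hb hM hM'
    have hcall : ∀ (m n : ℕ), ((n - (m + 1) : ℕ) : ℝ) = n - (m + 1) + ((m + 1 - n : ℕ) : ℝ) := by
      intro m n
      rcases le_total n (m + 1) with hn | hn
      · rw [Nat.sub_eq_zero_of_le hn, Nat.cast_sub hn]; push_cast; ring
      · rw [Nat.sub_eq_zero_of_le hn, Nat.cast_sub hn]; push_cast; ring
    have hq : ∀ m : ℕ, HasSum (fun p : ℕ × ℕ =>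
        (a p.1 * a p.2 + b p.1 * b p.2 - 2 * a p.1 * b p.2) * ((p.1 + p.2 - (m + 1) : ℕ) : ℝ))
        (∑ j ∈ Finset.range (m + 1), (B j - A j) * (B (m - j) - A (m - j))) := by
      intro m
      have hput := hasSum_put ha0 hb0 hA hB m
      have := ((hlin.1.sub hlin.2).sub ((hcst.1.sub hcst.2).mul_left ((m : ℝ) + 1))).add
        (hput.1.sub hput.2)
      refine hs_congr (this) (fun p => ?_) ?_
      · rw [hcall]; ring
      · rw [conv_identity]; ring
    have hqP : ∀ N, 0 ≤ ∑' p : ℕ × ℕ,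
        (a p.1 * a p.2 + b p.1 * b p.2 - 2 * a p.1 * b p.2) * P N (p.1 + p.2) := by
      intro N
      have := hasSum_sum (s := Finset.range N) (fun k _ => (hq k).mul_left (w k))
      have h2 : HasSum (fun p : ℕ × ℕ =>
        (a p.1 * a p.2 + b p.1 * b p.2 - 2 * a p.1 * b p.2) * P N (p.1 + p.2)) _ := hs_congr this (fun p => by
          rw [hP, Finset.mul_sum]
          apply Finset.sum_congr rfl
          intro k _
          ring) rfl
      rw [h2.tsum_eq]
      exact Finset.sum_nonneg fun k _ => mul_nonneg (hw0 k) (h k)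
    have hψ1 : HasSum (fun p : ℕ × ℕ => (a p.1 * a p.2 + b p.1 * b p.2) * ψ (p.1 + p.2)) _ :=
      hs_congr ((hs1.hasSum.sub (hcst.1.mul_left (f 0))).sub
        (hlin.1.mul_left (f 1 - f 0))) (fun p => by rw [hexp (p.1 + p.2)]; ring) rfl
    have hψ2 : HasSum (fun p : ℕ × ℕ => 2 * a p.1 * b p.2 * ψ (p.1 + p.2)) _ :=
      hs_congr ((hs2.hasSum.sub (hcst.2.mul_left (f 0))).sub
        (hlin.2.mul_left (f 1 - f 0))) (fun p => by rw [hexp (p.1 + p.2)]; ring) rfl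
    have htend : Filter.Tendsto (fun N => ∑' p : ℕ × ℕ,
        (a p.1 * a p.2 + b p.1 * b p.2 - 2 * a p.1 * b p.2) * P N (p.1 + p.2)) Filter.atTop
        (nhds (∑' p : ℕ × ℕ,
        (a p.1 * a p.2 + b p.1 * b p.2 - 2 * a p.1 * b p.2) * ψ (p.1 + p.2))) := by
      apply tendsto_tsum_of_dominated_convergence (hψ1.summable.add hψ2.summable)
      · intro p
        apply tendsto_const_nhds.congr'
        filter_upwards [Filter.eventually_ge_atTop (p.1 + p.2)] with N hN
        rw [hPlarge N _ hN]
      · apply Filter.Eventually.of_forall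
        intro N p
        have e1 : 0 ≤ a p.1 * a p.2 + b p.1 * b p.2 :=
          add_nonneg (mul_nonneg (ha0 _) (ha0 _)) (mul_nonneg (hb0 _) (hb0 _))
        have e2 : 0 ≤ 2 * a p.1 * b p.2 :=
          mul_nonneg (mul_nonneg zero_le_two (ha0 _)) (hb0 _)
        rw [norm_mul, Real.norm_eq_abs, Real.norm_eq_abs, abs_of_nonneg (hP0 _ _), ← add_mul]
        apply mul_le_mul _ (hPle _ _) (hP0 _ _) (add_nonneg e1 e2)
        rw [abs_le]; constructor <;> linarith
    have hfin := ge_of_tendsto' htend hqP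
    have hsub := hψ1.sub hψ2
    have hsub2 : (fun p : ℕ × ℕ => (a p.1 * a p.2 + b p.1 * b p.2) * ψ (p.1 + p.2) -
        2 * a p.1 * b p.2 * ψ (p.1 + p.2)) = fun p : ℕ × ℕ =>
        (a p.1 * a p.2 + b p.1 * b p.2 - 2 * a p.1 * b p.2) * ψ (p.1 + p.2) := by
      funext p; ring
    rw [hsub2] at hsub
    rw [hsub.tsum_eq] at hfin
    linarith

/-- Theorem 2.6: For discrete probability distributions μ, ν
concentrated on the non-negative integers, with point masses (a_k), (b_k) and finite
first moments, the following are equivalent: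
(1) the Raşa-type inequality holds for all convex φ (for which the series converge);
(2) (F−G)∗(F−G) ≥ 0;
(3) all discrete self-convolution coefficients of G−F are non-negative. -/
theorem stmt6 (μ ν : Measure ℝ) [IsProbabilityMeasure μ] [IsProbabilityMeasure ν]
    (a b : ℕ → ℝ)
    (hμc : μ (Set.range (fun k : ℕ => (k : ℝ)))ᶜ = 0)
    (hνc : ν (Set.range (fun k : ℕ => (k : ℝ)))ᶜ = 0)
    (ha : ∀ k : ℕ, a k = (μ {(k : ℝ)}).toReal) (hb : ∀ k : ℕ, b k = (ν {(k : ℝ)}).toReal)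
    (hμ1 : Integrable (fun x : ℝ => |x|) μ) (hν1 : Integrable (fun x : ℝ => |x|) ν) :
    ((∀ φ : ℝ → ℝ, ConvexOn ℝ Set.univ φ →
        Summable (fun p : ℕ × ℕ => (a p.1 * a p.2 + b p.1 * b p.2) * φ ((p.1 : ℝ) + p.2)) →
        Summable (fun p : ℕ × ℕ => 2 * a p.1 * b p.2 * φ ((p.1 : ℝ) + p.2)) →
        ∑' p : ℕ × ℕ, 2 * a p.1 * b p.2 * φ ((p.1 : ℝ) + p.2) ≤
          ∑' p : ℕ × ℕ, (a p.1 * a p.2 + b p.1 * b p.2) * φ ((p.1 : ℝ) + p.2)) ↔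
      (∀ x : ℝ, 0 ≤ fconv (fun t => distFun μ t - distFun ν t)
        (fun t => distFun μ t - distFun ν t) x)) ∧
    ((∀ x : ℝ, 0 ≤ fconv (fun t => distFun μ t - distFun ν t)
        (fun t => distFun μ t - distFun ν t) x) ↔
      (∀ i : ℕ, 0 ≤ ∑ j ∈ Finset.range (i + 1),
        (distFun ν (j : ℝ) - distFun μ (j : ℝ)) *
          (distFun ν ((i - j : ℕ) : ℝ) - distFun μ ((i - j : ℕ) : ℝ)))) := by
  have ha0 : ∀ i, 0 ≤ a i := fun i => by rw [ha]; exact ENNReal.toReal_nonneg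
  have hb0 : ∀ i, 0 ≤ b i := fun i => by rw [hb]; exact ENNReal.toReal_nonneg
  have ha1 : HasSum a 1 := by
    simpa using hasSum_conc μ a hμc ha (fun _ => 1) (integrable_const 1)
  have hb1 : HasSum b 1 := by
    simpa using hasSum_conc ν b hνc hb (fun _ => 1) (integrable_const 1)
  have haM : HasSum (fun i : ℕ => a i * i) _ :=
    hs_congr (hasSum_conc μ a hμc ha _ hμ1) (fun i => by simp) rfl
  have hbM : HasSum (fun i : ℕ => b i * i) _ :=
    hs_congr (hasSum_conc ν b hνc hb _ hν1) (fun i => by simp) rfl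
  have h13 := one_iff_three ha0 hb0 ha1 hb1 haM hbM
    (distFun_sum μ a hμc ha) (distFun_sum ν b hνc hb)
  have h23 := two_iff_three (fun t => distFun μ t - distFun ν t)
    (fun k : ℕ => distFun μ k - distFun ν k) (by
      intro t
      rw [distFun_floor μ hμc t, distFun_floor ν hνc t]
      split_ifs <;> simp)
  have hsgn : ∀ i : ℕ, ∑ j ∈ Finset.range (i + 1),
        (distFun ν (j : ℝ) - distFun μ (j : ℝ)) *
          (distFun ν ((i - j : ℕ) : ℝ) - distFun μ ((i - j : ℕ) : ℝ)) =
      ∑ j ∈ Finset.range (i + 1),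
        (distFun μ (j : ℝ) - distFun ν (j : ℝ)) *
          (distFun μ ((i - j : ℕ) : ℝ) - distFun ν ((i - j : ℕ) : ℝ)) := by
    intro i
    apply Finset.sum_congr rfl
    intro j _
    ring
  have h23' := h23
  simp only [← hsgn] at h23'
  exact ⟨h13.trans h23'.symm, h23'⟩
end

section
/- Let μ₁,…,μ_m be finite Borel measures on ℝ with finite first moments, and set a_i = μ_i(ℝ) and b_i = ∫x dμ_i for i = 1,…,m. Let P and Q be real polynomials in m variables with non-negative coefficients such that P(μ₁,…,μ_m) ≼_cx Q(μ₁,…,μ_m), where the product of variables is interpreted as convolution of measures. Then P(a₁,…,a_m) = Q(a₁,…,a_m) and the directional derivatives of P and Q along the vector (b₁,…,b_m) at the point (a₁,…,a_m) coincide: ∂P/∂(b₁,…,b_m)(a₁,…,a_m) = ∂Q/∂(b₁,…,b_m)(a₁,…,a_m). -/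
open MeasureTheory Set

/-- `ν` is finite, with finite first moment, mass `p.fst` and mean `p.snd`. -/
def HasMom (ν : Measure ℝ) (p : TrivSqZeroExt ℝ ℝ) : Prop :=
  IsFiniteMeasure ν ∧ Integrable (fun x : ℝ => x) ν ∧ (ν Set.univ).toReal = p.fst ∧
    ∫ x, x ∂ν = p.snd

lemma HasMom.dirac : HasMom (Measure.dirac 0) 1 := by
  refine ⟨inferInstance, integrable_dirac (by simp), by simp, by simp⟩

lemma HasMom.conv {μ ν : Measure ℝ} {p q : TrivSqZeroExt ℝ ℝ} (h : HasMom μ p)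
    (k : HasMom ν q) : HasMom (Measure.conv μ ν) (p * q) := by
  obtain ⟨_, h1, h2, h3⟩ := h
  obtain ⟨_, k1, k2, k3⟩ := k
  have e1 : Integrable (fun z : ℝ × ℝ => z.1) (μ.prod ν) := h1.comp_fst ν
  have e2 : Integrable (fun z : ℝ × ℝ => z.2) (μ.prod ν) := k1.comp_snd μ
  refine ⟨inferInstance, ?_, ?_, ?_⟩
  · unfold Measure.conv
    rw [integrable_map_measure (by fun_prop) (by fun_prop)]
    exact e1.add e2
  · unfold Measure.conv
    rw [Measure.map_apply (by fun_prop) MeasurableSet.univ]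
    rw [Set.preimage_univ, ← Set.univ_prod_univ, Measure.prod_prod, ENNReal.toReal_mul, h2, k2]
    simp
  · unfold Measure.conv
    rw [integral_map (by fun_prop) (by fun_prop), integral_add e1 e2,
      integral_fun_fst (fun x : ℝ => x), integral_fun_snd (fun x : ℝ => x)]
    simp [Measure.real, h2, h3, k2, k3]
    ring

lemma HasMom.convPow {μ : Measure ℝ} {p : TrivSqZeroExt ℝ ℝ} (h : HasMom μ p) (n : ℕ) :
    HasMom (convPow μ n) (p ^ n) := by
  induction n with
  | zero => simpa [_root_.convPow] using HasMom.dirac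
  | succ n ih => rw [pow_succ]; exact ih.conv h

lemma HasMom.convList {n : ℕ} (μ : Fin n → Measure ℝ) (p : Fin n → TrivSqZeroExt ℝ ℝ)
    (h : ∀ i, HasMom (μ i) (p i)) : HasMom (convList (List.ofFn μ)) (∏ i, p i) := by
  induction n with
  | zero => simpa [_root_.convList] using HasMom.dirac
  | succ n ih =>
    rw [List.ofFn_succ, Fin.prod_univ_succ]
    exact (h 0).conv (ih _ _ fun i => h i.succ)

lemma HasMom.sum {ι : Type*} (s : Finset ι) (c : ι → ℝ) (hc : ∀ i, 0 ≤ c i)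
    (μ : ι → Measure ℝ) (p : ι → TrivSqZeroExt ℝ ℝ)
    (h : ∀ i, HasMom (μ i) (p i)) :
    HasMom (∑ i ∈ s, ENNReal.ofReal (c i) • μ i) (∑ i ∈ s, c i • p i) := by
  classical
  induction s using Finset.induction_on with
  | empty => exact ⟨by simp; infer_instance, by simp, by simp, by simp⟩
  | insert i s hi ih =>
    rw [Finset.sum_insert hi, Finset.sum_insert hi]
    obtain ⟨_, h1, h2, h3⟩ := ih
    obtain ⟨_, k1, k2, k3⟩ := h i
    have hf : IsFiniteMeasure (ENNReal.ofReal (c i) • μ i) :=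
      Measure.smul_finite _ ENNReal.ofReal_ne_top
    have k1' := k1.smul_measure (c := ENNReal.ofReal (c i)) ENNReal.ofReal_ne_top
    refine ⟨inferInstance, k1'.add_measure h1, ?_, ?_⟩
    · rw [Measure.add_apply, ENNReal.toReal_add (measure_ne_top _ _) (measure_ne_top _ _), h2]
      simp [k2, hc]
    · rw [integral_add_measure k1' h1, integral_smul_measure, h3, k3]
      simp [hc]

lemma aeval_dual {m : ℕ} (a b : Fin m → ℝ) (P : MvPolynomial (Fin m) ℝ) :
    (MvPolynomial.aeval (fun i => (TrivSqZeroExt.inl (a i) + TrivSqZeroExt.inr (b i) :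
      TrivSqZeroExt ℝ ℝ)) P) = TrivSqZeroExt.inl (MvPolynomial.eval a P) +
      TrivSqZeroExt.inr (∑ i, b i * MvPolynomial.eval a (MvPolynomial.pderiv i P)) := by
  induction P using MvPolynomial.induction_on with
  | C r => ext <;> simp [MvPolynomial.algebraMap_eq, TrivSqZeroExt.algebraMap_eq_inl]
  | add p q hp hq =>
    rw [map_add, hp, hq]
    ext <;> simp [mul_add, Finset.sum_add_distrib]
  | mul_X p n hp =>
    rw [map_mul, hp, MvPolynomial.aeval_X]
    ext
    · simp
    · simp [Derivation.leibniz, MvPolynomial.pderiv_X, mul_add, Finset.sum_add_distrib,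
        Pi.single_apply, apply_ite]
      rw [Finset.sum_mul, add_comm]
      congr 1
      exact Finset.sum_congr rfl fun i _ => by ring

lemma HasMom.convPoly {m : ℕ} (μ : Fin m → Measure ℝ) (a b : Fin m → ℝ)
    (h : ∀ i, HasMom (μ i) (TrivSqZeroExt.inl (a i) + TrivSqZeroExt.inr (b i)))
    (P : MvPolynomial (Fin m) ℝ) (hP : ∀ d, 0 ≤ MvPolynomial.coeff d P) :
    HasMom (convPoly P μ) (TrivSqZeroExt.inl (MvPolynomial.eval a P) +
      TrivSqZeroExt.inr (∑ i, b i * MvPolynomial.eval a (MvPolynomial.pderiv i P))) := by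
  rw [← aeval_dual, MvPolynomial.aeval_def, MvPolynomial.eval₂_eq']
  simp_rw [← Algebra.smul_def]
  exact HasMom.sum _ _ hP _ _ fun d => HasMom.convList _ _ fun i => (h i).convPow (d i)

/-- Proposition 3.1: if P(μ₁,…,μ_m) ≼ₓ Q(μ₁,…,μ_m) for convolution
polynomials with non-negative coefficients, then P(a) = Q(a) and the directional
derivatives of P and Q along b = (∫x dμᵢ)ᵢ at a = (μᵢ(ℝ))ᵢ coincide. -/
theorem stmt9 (m : ℕ) (μ : Fin m → Measure ℝ) [∀ i, IsFiniteMeasure (μ i)]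
    (hint : ∀ i, Integrable (fun x : ℝ => |x|) (μ i))
    (a b : Fin m → ℝ)
    (hA : ∀ i, a i = (μ i Set.univ).toReal) (hB : ∀ i, b i = ∫ x, x ∂(μ i))
    (P Q : MvPolynomial (Fin m) ℝ)
    (hP : ∀ d, 0 ≤ MvPolynomial.coeff d P) (hQ : ∀ d, 0 ≤ MvPolynomial.coeff d Q)
    (hord : ConvexOrder (convPoly P μ) (convPoly Q μ)) :
    MvPolynomial.eval a P = MvPolynomial.eval a Q ∧
      ∑ i, b i * MvPolynomial.eval a (MvPolynomial.pderiv i P) =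
        ∑ i, b i * MvPolynomial.eval a (MvPolynomial.pderiv i Q) := by
  have h : ∀ i, HasMom (μ i) (TrivSqZeroExt.inl (a i) + TrivSqZeroExt.inr (b i)) := fun i =>
    ⟨inferInstance, (integrable_norm_iff (by fun_prop)).1 (hint i), by simp [hA], by simp [hB]⟩
  obtain ⟨_, p1, p2, p3⟩ := HasMom.convPoly μ a b h P hP
  obtain ⟨_, q1, q2, q3⟩ := HasMom.convPoly μ a b h Q hQ
  simp only [TrivSqZeroExt.fst_add, TrivSqZeroExt.snd_add, TrivSqZeroExt.fst_inl,
    TrivSqZeroExt.fst_inr, TrivSqZeroExt.snd_inl, TrivSqZeroExt.snd_inr, add_zero, zero_add]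
    at p2 p3 q2 q3
  have c1 := hord (fun _ => 1) (convexOn_const _ convex_univ) (integrable_const _)
    (integrable_const _)
  have c2 := hord (fun _ => -1) (convexOn_const _ convex_univ) (integrable_const _)
    (integrable_const _)
  have c3 := hord (fun x => x) (convexOn_id convex_univ) p1 q1
  have c4 := hord (fun x => -x) (concaveOn_id convex_univ).neg p1.neg q1.neg
  rw [integral_neg, integral_neg] at c4
  simp only [integral_const, Measure.real, smul_eq_mul, mul_one, mul_neg] at c1 c2
  constructor <;> linarith
end

section
/- Let μ₁,…,μ_m be finite Borel measures on ℝ with finite first moments such that μ₁(ℝ) = ⋯ = μ_m(ℝ) and ((F_i−F_j)*(F_i−F_j))(x) ≥ 0 for all i,j ∈ {1,…,m} and all x ∈ ℝ, where F_i is the distribution function of μ_i. Let P and Q be polynomials in x₁,…,x_m with non-negative coefficients such that Q − P = Σ_{i≠j} R_{i,j}(x₁,…,x_m)·(x_i − x_j)², where the R_{i,j} are polynomials with non-negative coefficients. Then P(μ₁,…,μ_m) ≼_cx Q(μ₁,…,μ_m). -/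
open MeasureTheory Set

set_option linter.all false

/-- Finite measure with a finite first moment. -/
def FM (μ : Measure ℝ) : Prop := IsFiniteMeasure μ ∧ Integrable (fun x : ℝ => x) μ

/-- Affine functions plus non-negative combinations of hinges. -/
inductive Cls : (ℝ → ℝ) → Prop
  | affine (a b : ℝ) : Cls (fun x => a + b * x)
  | hinge (c a : ℝ) (hc : 0 ≤ c) : Cls (fun x => c * max (a - x) 0)
  | add (f g : ℝ → ℝ) : Cls f → Cls g → Cls (fun x => f x + g x)

lemma FM.dirac : FM (Measure.dirac 0) := ⟨inferInstance, integrable_dirac (by simp)⟩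

lemma FM.conv {μ ν : Measure ℝ} (hμ : FM μ) (hν : FM ν) : FM (Measure.conv μ ν) := by
  have := hμ.1
  have := hν.1
  refine ⟨inferInstance, ?_⟩
  unfold Measure.conv
  rw [integrable_map_measure (by fun_prop) (by fun_prop)]
  exact (hμ.2.comp_fst ν).add (hν.2.comp_snd μ)

lemma FM.integrable {μ : Measure ℝ} (hμ : FM μ) {f : ℝ → ℝ} (hf : Cls f) : Integrable f μ := by
  have := hμ.1
  induction hf with
  | affine a b => exact (integrable_const a).add (hμ.2.const_mul b)
  | hinge c a hc =>
    have h1 : Integrable (fun x : ℝ => a - x) μ := (integrable_const a).sub hμ.2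
    exact (h1.pos_part).const_mul c
  | add f g _ _ h1 h2 => exact h1.add h2

lemma Cls.translate {f : ℝ → ℝ} (hf : Cls f) (z : ℝ) : Cls (fun x => f (z + x)) := by
  induction hf with
  | affine a b =>
    have : (fun x => a + b * (z + x)) = fun x => (a + b * z) + b * x := by ext; ring
    rw [this]; exact Cls.affine _ _
  | hinge c a hc =>
    have : (fun x => c * max (a - (z + x)) 0) = fun x => c * max ((a - z) - x) 0 := by
      ext; rw [sub_sub]
    rw [this]; exact Cls.hinge _ _ hc
  | add f g _ _ h1 h2 => exact Cls.add _ _ h1 h2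

lemma conv_mass {μ ν : Measure ℝ} (hμ : FM μ) (hν : FM ν) :
    (Measure.conv μ ν).real univ = μ.real univ * ν.real univ := by
  have := hμ.1
  have := hν.1
  have : ∫ _, (1:ℝ) ∂(Measure.conv μ ν) = ∫ _, ∫ _, (1:ℝ) ∂ν ∂μ :=
    integral_conv (integrable_const _)
  simpa using this

lemma conv_mean {μ ν : Measure ℝ} (hμ : FM μ) (hν : FM ν) :
    ∫ x, x ∂(Measure.conv μ ν) = ν.real univ * ∫ x, x ∂μ + μ.real univ * ∫ x, x ∂ν := by
  have := hμ.1
  have := hν.1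
  rw [integral_conv (hμ.conv hν).2]
  have : ∀ x : ℝ, ∫ y, (x + y) ∂ν = ν.real univ * x + ∫ y, y ∂ν := by
    intro x
    rw [integral_add (integrable_const _) hν.2]; simp
  simp_rw [this]
  rw [integral_add (hμ.2.const_mul _) (integrable_const _), integral_const_mul]; simp

lemma hinge_conv {α β : Measure ℝ} (hα : FM α) (hβ : FM β) (a : ℝ) :
    Integrable (fun t => distFun α t * distFun β (a - t)) ∧
    ∫ t, distFun α t * distFun β (a - t) = ∫ y, max (a - y) 0 ∂(Measure.conv α β) := by
  have := hα.1
  have := hβ.1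
  have hmon : ∀ γ : Measure ℝ, FM γ → Monotone (distFun γ) := by
    intro γ hγ x y hxy
    have := hγ.1
    exact ENNReal.toReal_mono (measure_ne_top _ _) (measure_mono (Iic_subset_Iic.2 hxy))
  have hmeas : Measurable (fun t => distFun α t * distFun β (a - t)) :=
    (hmon α hα).measurable.mul ((hmon β hβ).measurable.comp (by fun_prop))
  have hnn : ∀ t, 0 ≤ distFun α t * distFun β (a - t) := fun t =>
    mul_nonneg ENNReal.toReal_nonneg ENNReal.toReal_nonneg
  have hI : Integrable (fun y => max (a - y) 0) (Measure.conv α β) := by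
    simpa using (hα.conv hβ).integrable (Cls.hinge 1 a zero_le_one)
  have hset : MeasurableSet {q : ℝ × (ℝ × ℝ) | q.2.1 ≤ q.1 ∧ q.2.2 ≤ a - q.1} := by
    exact (measurableSet_le (f := fun q : ℝ × (ℝ × ℝ) => q.2.1) (g := fun q => q.1)
      (by fun_prop) (by fun_prop)).inter
      (measurableSet_le (f := fun q : ℝ × (ℝ × ℝ) => q.2.2) (g := fun q => a - q.1)
      (by fun_prop) (by fun_prop))
  have key : ∫⁻ t, ENNReal.ofReal (distFun α t * distFun β (a - t))
      = ∫⁻ y, ENNReal.ofReal (max (a - y) 0) ∂(Measure.conv α β) := by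
    rw [Measure.conv, lintegral_map (by fun_prop) (by fun_prop)]
    have h1 : ∀ t, ENNReal.ofReal (distFun α t * distFun β (a - t))
        = ∫⁻ p, ({q : ℝ × (ℝ × ℝ) | q.2.1 ≤ q.1 ∧ q.2.2 ≤ a - q.1}.indicator
          (fun _ => (1 : ENNReal)) (t, p)) ∂(α.prod β) := by
      intro t
      have : (fun p : ℝ × ℝ => {q : ℝ × (ℝ × ℝ) | q.2.1 ≤ q.1 ∧ q.2.2 ≤ a - q.1}.indicator
          (fun _ => (1 : ENNReal)) (t, p)) = (Iic t ×ˢ Iic (a - t)).indicator 1 := by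
        ext p; simp [indicator, Prod.le_def]
      rw [this, lintegral_indicator_one (measurableSet_Iic.prod measurableSet_Iic),
        Measure.prod_prod, distFun, distFun, ENNReal.ofReal_mul ENNReal.toReal_nonneg]
      simp [measure_ne_top]
    simp_rw [h1]
    rw [lintegral_lintegral_swap]
    · refine lintegral_congr fun p => ?_
      have : (fun t : ℝ => {q : ℝ × (ℝ × ℝ) | q.2.1 ≤ q.1 ∧ q.2.2 ≤ a - q.1}.indicator
          (fun _ => (1 : ENNReal)) (t, p)) = (Icc p.1 (a - p.2)).indicator 1 := by
        ext t
        have : p.2 ≤ a - t ↔ t ≤ a - p.2 := by constructor <;> intro h <;> linarith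
        simp [indicator, this]
      rw [this, lintegral_indicator_one measurableSet_Icc, Real.volume_Icc]
      have h2 : a - (p.1 + p.2) = a - p.2 - p.1 := by ring
      rw [h2]
      rcases le_total 0 (a - p.2 - p.1) with h | h
      · rw [max_eq_left h]
      · rw [max_eq_right h, ENNReal.ofReal_of_nonpos h]; simp
    · exact (measurable_const.indicator hset).aemeasurable
  have hnn2 : 0 ≤ᵐ[Measure.conv α β] (fun y : ℝ => max (a - y) 0) :=
    Filter.Eventually.of_forall fun y => le_max_right _ _
  constructor
  · refine ⟨hmeas.aestronglyMeasurable, ?_⟩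
    rw [hasFiniteIntegral_iff_ofReal (Filter.Eventually.of_forall hnn), key,
      ← hasFiniteIntegral_iff_ofReal hnn2]
    exact hI.2
  · rw [integral_eq_lintegral_of_nonneg_ae (Filter.Eventually.of_forall hnn)
      hmeas.aestronglyMeasurable, key, integral_eq_lintegral_of_nonneg_ae
      hnn2 hI.1]

lemma two_nonneg {α β : Measure ℝ} (hα : FM α) (hβ : FM β) (hm : α univ = β univ)
    (hF : ∀ x, 0 ≤ fconv (fun t => distFun α t - distFun β t)
      (fun t => distFun α t - distFun β t) x) {ψ : ℝ → ℝ} (hψ : Cls ψ) :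
    0 ≤ ∫ x, ψ x ∂(Measure.conv α α) - 2 * ∫ x, ψ x ∂(Measure.conv α β)
      + ∫ x, ψ x ∂(Measure.conv β β) := by
  have := hα.1
  have := hβ.1
  have hm' : α.real univ = β.real univ := by simp [Measure.real, hm]
  induction hψ with
  | affine a b =>
    have h : ∀ {γ δ : Measure ℝ}, FM γ → FM δ → ∫ x, (a + b * x) ∂(Measure.conv γ δ)
        = γ.real univ * δ.real univ * a
          + b * (δ.real univ * ∫ x, x ∂γ + γ.real univ * ∫ x, x ∂δ) := by
      intro γ δ hγ hδ
      have := (hγ.conv hδ).1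
      rw [integral_add (integrable_const _) ((hγ.conv hδ).2.const_mul _), integral_const_mul,
        conv_mean hγ hδ]
      simp [conv_mass hγ hδ]
    rw [h hα hα, h hα hβ, h hβ hβ, hm']
    apply le_of_eq; ring
  | hinge c a hc =>
    simp_rw [integral_const_mul]
    have h := hF a
    unfold fconv at h
    have e : ∀ t, (distFun α t - distFun β t) * (distFun α (a - t) - distFun β (a - t))
        = ((distFun α t * distFun α (a - t) - distFun α t * distFun β (a - t))
          - distFun β t * distFun α (a - t)) + distFun β t * distFun β (a - t) := by
      intro t; ring
    simp_rw [e] at h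
    have i1 := hinge_conv hα hα a
    have i2 := hinge_conv hα hβ a
    have i3 := hinge_conv hβ hα a
    have i4 := hinge_conv hβ hβ a
    have j1 : Integrable (fun t => distFun α t * distFun α (a - t)
        - distFun α t * distFun β (a - t)) := i1.1.sub i2.1
    have j2 : Integrable (fun t => distFun α t * distFun α (a - t)
        - distFun α t * distFun β (a - t) - distFun β t * distFun α (a - t)) := j1.sub i3.1
    rw [integral_add j2 i4.1, integral_sub j1 i3.1,
      integral_sub i1.1 i2.1, i1.2, i2.2, i3.2, i4.2, Measure.conv_comm β α] at h
    have := mul_nonneg hc h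
    linarith
  | add f g hf hg h1 h2 =>
    rw [integral_add ((hα.conv hα).integrable hf) ((hα.conv hα).integrable hg),
      integral_add ((hα.conv hβ).integrable hf) ((hα.conv hβ).integrable hg),
      integral_add ((hβ.conv hβ).integrable hf) ((hβ.conv hβ).integrable hg)]
    linarith

lemma three_nonneg {ρ α β : Measure ℝ} (hρ : FM ρ) (hα : FM α) (hβ : FM β)
    (hm : α univ = β univ)
    (hF : ∀ x, 0 ≤ fconv (fun t => distFun α t - distFun β t)
      (fun t => distFun α t - distFun β t) x) {ψ : ℝ → ℝ} (hψ : Cls ψ) :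
    0 ≤ ∫ x, ψ x ∂(Measure.conv ρ (Measure.conv α α))
      - 2 * ∫ x, ψ x ∂(Measure.conv ρ (Measure.conv α β))
      + ∫ x, ψ x ∂(Measure.conv ρ (Measure.conv β β)) := by
  have := hρ.1
  have := hα.1
  have := hβ.1
  have hI : ∀ {γ : Measure ℝ}, FM γ → Integrable (fun x => ∫ y, ψ (x + y) ∂γ) ρ := by
    intro γ hγ
    have := hγ.1
    have h := (hρ.conv hγ).integrable hψ
    have h' : Integrable (fun p : ℝ × ℝ => ψ (p.1 + p.2)) (ρ.prod γ) :=
      (integrable_map_measure h.1 (by fun_prop)).mp h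
    exact h'.integral_prod_left
  have hJ : Integrable (fun x => ∫ y, ψ (x + y) ∂(Measure.conv α α)
      - 2 * ∫ y, ψ (x + y) ∂(Measure.conv α β)) ρ :=
    (hI (hα.conv hα)).sub ((hI (hα.conv hβ)).const_mul 2)
  rw [integral_conv ((hρ.conv (hα.conv hα)).integrable hψ),
    integral_conv ((hρ.conv (hα.conv hβ)).integrable hψ),
    integral_conv ((hρ.conv (hβ.conv hβ)).integrable hψ), ← integral_const_mul,
    ← integral_sub (hI (hα.conv hα)) ((hI (hα.conv hβ)).const_mul 2),
    ← integral_add hJ (hI (hβ.conv hβ))]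
  exact integral_nonneg fun z => two_nonneg hα hβ hm hF (hψ.translate z)

/-- the convolution monomial -/
noncomputable def cmon {m : ℕ} (μ : Fin m → Measure ℝ) (d : Fin m →₀ ℕ) : Measure ℝ :=
  convList (List.ofFn fun i => convPow (μ i) (d i))

lemma FM.convPow {μ : Measure ℝ} (hμ : FM μ) (n : ℕ) : FM (convPow μ n) := by
  induction n with
  | zero => exact FM.dirac
  | succ n ih => exact ih.conv hμ

lemma FM.convList_ofFn {m : ℕ} (f : Fin m → Measure ℝ) (hf : ∀ i, FM (f i)) :
    FM (convList (List.ofFn f)) := by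
  induction m with
  | zero => simpa [convList] using FM.dirac
  | succ m ih =>
    rw [List.ofFn_succ]
    exact (hf 0).conv (ih _ fun i => hf _)

lemma convPow_add {μ : Measure ℝ} (hμ : FM μ) (a b : ℕ) :
    convPow μ (a + b) = Measure.conv (convPow μ a) (convPow μ b) := by
  have := hμ.1
  have := (hμ.convPow a).1
  induction b with
  | zero => simp [convPow]
  | succ b ih =>
    have := (hμ.convPow b).1
    rw [← add_assoc]
    simp only [convPow]
    rw [ih, Measure.conv_assoc]

lemma convList_ofFn_conv {m : ℕ} (f g : Fin m → Measure ℝ) (hf : ∀ i, FM (f i))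
    (hg : ∀ i, FM (g i)) : convList (List.ofFn fun i => Measure.conv (f i) (g i))
      = Measure.conv (convList (List.ofFn f)) (convList (List.ofFn g)) := by
  induction m with
  | zero => simp [convList]
  | succ m ih =>
    rw [List.ofFn_succ, List.ofFn_succ, List.ofFn_succ]
    simp only [convList]
    rw [ih _ _ (fun i => hf _) (fun i => hg _)]
    have := (hf 0).1
    have := (hg 0).1
    have := (FM.convList_ofFn (fun i : Fin m => f i.succ) (fun i => hf _)).1
    have := (FM.convList_ofFn (fun i : Fin m => g i.succ) (fun i => hg _)).1
    generalize convList (List.ofFn (fun i : Fin m => f i.succ)) = A at *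
    generalize convList (List.ofFn (fun i : Fin m => g i.succ)) = B at *
    rw [Measure.conv_assoc, Measure.conv_assoc, ← Measure.conv_assoc (g 0) A B,
      ← Measure.conv_assoc A (g 0) B, Measure.conv_comm A (g 0)]

lemma convList_dirac (m : ℕ) : convList (List.ofFn fun _ : Fin m => Measure.dirac (0:ℝ))
    = Measure.dirac 0 := by
  induction m with
  | zero => simp [convList]
  | succ m ih => rw [List.ofFn_succ]; simp only [convList]; rw [ih]; simp

lemma convList_single {m : ℕ} (ν : Measure ℝ) (hν : FM ν) (i : Fin m) :
    convList (List.ofFn fun k => if k = i then ν else Measure.dirac 0) = ν := by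
  have := hν.1
  induction m with
  | zero => exact i.elim0
  | succ m ih =>
    rw [List.ofFn_succ]
    simp only [convList]
    refine Fin.cases ?_ (fun j => ?_) i
    · simp only [Fin.succ_ne_zero, if_true, if_false]
      rw [convList_dirac]; simp
    · have h0 : (0 : Fin (m+1)) ≠ j.succ := (Fin.succ_ne_zero j).symm
      simp only [h0, if_false, Fin.succ_inj]
      rw [ih j]; simp

lemma FM.cmon {m : ℕ} {μ : Fin m → Measure ℝ} (hμ : ∀ i, FM (μ i)) (d : Fin m →₀ ℕ) :
    FM (cmon μ d) := FM.convList_ofFn _ fun i => (hμ i).convPow _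

lemma cmon_add {m : ℕ} {μ : Fin m → Measure ℝ} (hμ : ∀ i, FM (μ i)) (d e : Fin m →₀ ℕ) :
    cmon μ (d + e) = Measure.conv (cmon μ d) (cmon μ e) := by
  unfold cmon
  rw [← convList_ofFn_conv _ _ (fun i => (hμ i).convPow _) (fun i => (hμ i).convPow _)]
  congr 2; ext1 i
  exact convPow_add (hμ i) _ _

lemma cmon_single {m : ℕ} {μ : Fin m → Measure ℝ} (hμ : ∀ i, FM (μ i)) (i : Fin m) :
    cmon μ (Finsupp.single i 1) = μ i := by
  unfold cmon
  conv_rhs => rw [← convList_single (μ i) (hμ i) i]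
  congr 2; ext1 k
  have := (hμ i).1
  by_cases h : k = i
  · subst h; simp [convPow]
  · simp [h, Finsupp.single_apply, Ne.symm h, convPow]

/-- The linear functional on polynomials. -/
noncomputable def Lf {m : ℕ} (μ : Fin m → Measure ℝ) (ψ : ℝ → ℝ) :
    MvPolynomial (Fin m) ℝ →ₗ[ℝ] ℝ :=
  (MvPolynomial.basisMonomials (Fin m) ℝ).constr ℝ fun d => ∫ x, ψ x ∂(cmon μ d)

lemma Lf_monomial {m : ℕ} (μ : Fin m → Measure ℝ) (ψ : ℝ → ℝ) (d : Fin m →₀ ℕ) (c : ℝ) :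
    Lf μ ψ (MvPolynomial.monomial d c) = c * ∫ x, ψ x ∂(cmon μ d) := by
  have h : MvPolynomial.monomial d c = c • (MvPolynomial.basisMonomials (Fin m) ℝ) d := by
    simp [MvPolynomial.coe_basisMonomials, MvPolynomial.smul_monomial]
  rw [h, map_smul, Lf, Module.Basis.constr_basis, smul_eq_mul]

lemma Lf_apply {m : ℕ} (μ : Fin m → Measure ℝ) (ψ : ℝ → ℝ) (P : MvPolynomial (Fin m) ℝ) :
    Lf μ ψ P = ∑ d ∈ P.support, MvPolynomial.coeff d P * ∫ x, ψ x ∂(cmon μ d) := by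
  conv_lhs => rw [P.as_sum]
  rw [map_sum]
  exact Finset.sum_congr rfl fun d _ => Lf_monomial _ _ _ _

lemma integrable_convPoly {m : ℕ} {μ : Fin m → Measure ℝ} (ψ : ℝ → ℝ)
    (hI : ∀ d, Integrable ψ (cmon μ d)) (P : MvPolynomial (Fin m) ℝ) :
    Integrable ψ (convPoly P μ) := by
  unfold convPoly
  refine integrable_finsetSum_measure.2 fun d _ => ?_
  exact (hI d).smul_measure ENNReal.ofReal_ne_top

lemma integral_convPoly {m : ℕ} {μ : Fin m → Measure ℝ} (ψ : ℝ → ℝ)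
    (hI : ∀ d, Integrable ψ (cmon μ d)) (P : MvPolynomial (Fin m) ℝ)
    (hP : ∀ d, 0 ≤ MvPolynomial.coeff d P) :
    ∫ x, ψ x ∂(convPoly P μ) = Lf μ ψ P := by
  rw [Lf_apply]
  change ∫ x, ψ x ∂(∑ d ∈ P.support, ENNReal.ofReal (MvPolynomial.coeff d P) • cmon μ d) = _
  rw [integral_finsetSum_measure fun d _ => (hI d).smul_measure ENNReal.ofReal_ne_top]
  refine Finset.sum_congr rfl fun d _ => ?_
  rw [integral_smul_measure, ENNReal.toReal_ofReal (hP d), smul_eq_mul]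

lemma Lf_nonneg {m : ℕ} {μ : Fin m → Measure ℝ} (hμ : ∀ i, FM (μ i))
    (hmass : ∀ i j, μ i Set.univ = μ j Set.univ)
    (hF : ∀ i j, ∀ x : ℝ, 0 ≤ fconv (fun t => distFun (μ i) t - distFun (μ j) t)
      (fun t => distFun (μ i) t - distFun (μ j) t) x) {ψ : ℝ → ℝ} (hψ : Cls ψ)
    (R : MvPolynomial (Fin m) ℝ) (hR : ∀ d, 0 ≤ MvPolynomial.coeff d R) (i j : Fin m) :
    0 ≤ Lf μ ψ (R * (MvPolynomial.X i - MvPolynomial.X j) ^ 2) := by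
  rw [R.as_sum, Finset.sum_mul, map_sum]
  refine Finset.sum_nonneg fun d _ => ?_
  have e : (MvPolynomial.monomial d (MvPolynomial.coeff d R)) *
      (MvPolynomial.X i - MvPolynomial.X j) ^ 2
      = MvPolynomial.monomial (d + (Finsupp.single i 1 + Finsupp.single i 1)) (R.coeff d)
        - (2:ℝ) • MvPolynomial.monomial (d + (Finsupp.single i 1 + Finsupp.single j 1)) (R.coeff d)
        + MvPolynomial.monomial (d + (Finsupp.single j 1 + Finsupp.single j 1)) (R.coeff d) := by
    have h : ∀ k l : Fin m, MvPolynomial.monomial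
        (d + (Finsupp.single k 1 + Finsupp.single l 1)) (R.coeff d)
        = MvPolynomial.monomial d (R.coeff d) * (MvPolynomial.X k * MvPolynomial.X l) := by
      intro k l
      simp [MvPolynomial.X, MvPolynomial.monomial_mul]
    rw [h, h, h, two_smul]; ring
  rw [e, map_add, map_sub, map_smul, Lf_monomial, Lf_monomial, Lf_monomial]
  simp only [cmon_add hμ, cmon_single hμ, smul_eq_mul]
  have := mul_nonneg (hR d) (three_nonneg (FM.cmon hμ d) (hμ i) (hμ j) (hmass i j) (hF i j) hψ)
  linarith

lemma Cls.congr {f g : ℝ → ℝ} (hf : Cls f) (h : ∀ x, g x = f x) : Cls g := by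
  rwa [funext h]

lemma Cls.zero : Cls (fun _ => 0) := (Cls.affine 0 0).congr (by simp)

lemma Cls.smul {f : ℝ → ℝ} (hf : Cls f) {c : ℝ} (hc : 0 ≤ c) : Cls (fun x => c * f x) := by
  induction hf with
  | affine a b => exact (Cls.affine (c * a) (c * b)).congr fun x => by ring
  | hinge c' a hc' => exact (Cls.hinge (c * c') a (mul_nonneg hc hc')).congr fun x => by ring
  | add f g _ _ h1 h2 => exact (Cls.add _ _ h1 h2).congr fun x => by ring

lemma Cls.sum (f : ℕ → ℝ → ℝ) (hf : ∀ k, Cls (f k)) (N : ℕ) :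
    Cls (fun x => ∑ k ∈ Finset.range N, f k x) := by
  induction N with
  | zero => simpa using Cls.zero
  | succ N ih => exact (Cls.add _ _ ih (hf N)).congr fun x => Finset.sum_range_succ _ _

lemma integral_Ici (a x : ℝ) :
    ∫ t in (0:ℝ)..x, (Ici a).indicator (fun _ => (1:ℝ)) t = max (x - a) 0 - max (0 - a) 0 := by
  refine intervalIntegral.integral_eq_sub_of_hasDeriv_right
    (f := fun x => max (x - a) 0) (by fun_prop) ?_ ?_
  · intro t _
    by_cases h : a ≤ t
    · have : HasDerivWithinAt (fun x => x - a) 1 (Ioi t) t :=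
        ((hasDerivAt_id t).sub_const a).hasDerivWithinAt
      simp only [indicator, mem_Ici, h, if_true]
      refine this.congr (fun y hy => ?_) ?_
      · exact max_eq_left (by have : t < y := hy; linarith)
      · exact max_eq_left (by linarith)
    · push Not at h
      simp only [indicator, mem_Ici, not_le.2 h, if_false]
      have h0 : HasDerivAt (fun _ : ℝ => (0:ℝ)) 0 t := hasDerivAt_const t 0
      refine (h0.congr_of_eventuallyEq ?_).hasDerivWithinAt
      filter_upwards [Iio_mem_nhds h] with y hy
      exact max_eq_right (by have : y < a := hy; linarith)
  · apply Monotone.intervalIntegrable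
    intro s t hst
    simp only [indicator, mem_Ici]
    split_ifs <;> first | linarith | norm_num

lemma cls_upper (r : ℝ → ℝ) (hr : Monotone r) (s : ℝ) :
    Cls (fun x => ∫ t in (0:ℝ)..x, (if s ≤ r t then (1:ℝ) else 0)) := by
  by_cases hall : ∀ t, s ≤ r t
  · exact (Cls.affine 0 1).congr fun x => by simp [hall]
  by_cases hnone : ∀ t, ¬ s ≤ r t
  · exact Cls.zero.congr fun x => by simp [hnone]
  push Not at hall hnone
  obtain ⟨t0, h0⟩ := hall
  obtain ⟨t1, h1⟩ := hnone
  set U := {t | s ≤ r t}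
  have hbdd : BddBelow U := ⟨t0, fun t (ht : s ≤ r t) => by
    by_contra hlt
    push Not at hlt
    have := hr hlt.le
    linarith⟩
  set a := sInf U
  have hae : ∀ x : ℝ, ∫ t in (0:ℝ)..x, (if s ≤ r t then (1:ℝ) else 0)
      = ∫ t in (0:ℝ)..x, (Ici a).indicator (fun _ => (1:ℝ)) t := by
    intro x
    refine intervalIntegral.integral_congr_ae ?_
    have : ∀ᵐ t : ℝ, t ≠ a := by simp [ae_iff]
    filter_upwards [this] with t ht _
    rcases lt_or_gt_of_ne ht with h | h
    · have : ¬ s ≤ r t := fun h' => absurd (csInf_le hbdd (show t ∈ U from h')) (not_le.2 h)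
      simp [indicator, this, h]
    · obtain ⟨u, hu, hut⟩ := (csInf_lt_iff hbdd ⟨t1, h1⟩).1 h
      have : s ≤ r t := le_trans hu (hr hut.le)
      simp [indicator, this, h.le]
  refine (Cls.add _ _ (Cls.affine (-a - max (0 - a) 0) 1)
    (Cls.hinge 1 a zero_le_one)).congr fun x => ?_
  rw [hae, integral_Ici]
  rcases le_total x a with h | h
  · rw [max_eq_right (by linarith : x - a ≤ 0), max_eq_left (by linarith : 0 ≤ a - x)]; ring
  · rw [max_eq_left (by linarith : 0 ≤ x - a), max_eq_right (by linarith : a - x ≤ 0)]; ring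

/-- Counting function. -/
noncomputable def cnt (N : ℕ) (y : ℝ) : ℝ :=
  ∑ k ∈ Finset.range N, if ((k:ℝ) + 1 ≤ y) then (1:ℝ) else 0

lemma cnt_bounds (N : ℕ) (y : ℝ) : 0 ≤ cnt N y ∧ cnt N y ≤ N ∧ cnt N y ≤ max 0 y ∧
    (N ≤ y → (N:ℝ) ≤ cnt N y) ∧ (y < N → y - 1 ≤ cnt N y) := by
  induction N with
  | zero =>
    simp only [cnt, Finset.range_zero, Finset.sum_empty]
    refine ⟨le_rfl, by simp, le_max_left _ _, by simp, ?_⟩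
    intro h
    simp at h
    linarith
  | succ N ih =>
    obtain ⟨h1, h2, h3, h4, h5⟩ := ih
    have e : cnt (N+1) y = cnt N y + if ((N:ℝ) + 1 ≤ y) then (1:ℝ) else 0 := by
      unfold cnt; rw [Finset.sum_range_succ]
    rw [e]
    push_cast
    have hN : (0:ℝ) ≤ N := Nat.cast_nonneg N
    split_ifs with h
    · refine ⟨by linarith, by linarith, le_max_of_le_right (by linarith), fun _ => ?_, ?_⟩
      · have := h4 (by linarith); linarith
      · intro h'; linarith
    · refine ⟨by linarith, by linarith, by linarith, fun h' => absurd h' h, fun _ => ?_⟩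
      push Not at h
      by_cases hy : (N:ℝ) ≤ y
      · have := h4 hy; linarith
      · have := h5 (by linarith); linarith

/-- Discretised and truncated derivative. -/
noncomputable def sn (r : ℝ → ℝ) (n : ℕ) (t : ℝ) : ℝ :=
  -(n:ℝ) + (1 / (n:ℝ)) * cnt (2 * n ^ 2) (n * (r t + n))

lemma sn_bounds (r : ℝ → ℝ) (n : ℕ) (hn : 0 < n) (t : ℝ) :
    -(n:ℝ) ≤ sn r n t ∧ sn r n t ≤ n ∧ sn r n t ≤ max (-(n:ℝ)) (r t) ∧
    (r t < n → r t - 1 / n ≤ sn r n t) ∧ (n ≤ r t → n ≤ sn r n t) := by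
  obtain ⟨h1, h2, h3, h4, h5⟩ := cnt_bounds (2 * n ^ 2) (n * (r t + n))
  have hn' : (0:ℝ) < n := Nat.cast_pos.2 hn
  push_cast at h2 h4 h5
  set c := cnt (2 * n ^ 2) (n * (r t + n))
  have es : (n:ℝ) * sn r n t = -(n:ℝ)^2 + c := by
    unfold sn; field_simp; rfl
  set s := sn r n t
  refine ⟨?_, ?_, ?_, ?_, ?_⟩
  · apply le_of_mul_le_mul_left _ hn'; nlinarith
  · apply le_of_mul_le_mul_left _ hn'; nlinarith
  · rcases le_max_iff.1 h3 with h | h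
    · apply le_max_of_le_left; apply le_of_mul_le_mul_left _ hn'; nlinarith
    · apply le_max_of_le_right; apply le_of_mul_le_mul_left _ hn'; nlinarith
  · intro h
    have := h5 (by nlinarith)
    apply le_of_mul_le_mul_left _ hn'
    have : (n:ℝ) * (r t - 1 / n) = n * r t - 1 := by field_simp
    nlinarith
  · intro h
    have := h4 (by nlinarith)
    apply le_of_mul_le_mul_left _ hn'
    nlinarith

lemma sn_mono (r : ℝ → ℝ) (hr : Monotone r) (n : ℕ) : Monotone (sn r n) := by
  intro s t hst
  unfold sn cnt
  gcongr with k hk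
  split_ifs with h1 h2
  · exact le_rfl
  · exfalso; apply h2; refine h1.trans ?_
    have := hr hst
    gcongr
  · norm_num
  · exact le_rfl

lemma cls_sn (r : ℝ → ℝ) (hr : Monotone r) (n : ℕ) (hn : 0 < n) :
    Cls (fun x => ∫ t in (0:ℝ)..x, sn r n t) := by
  have hn' : (0:ℝ) < n := Nat.cast_pos.2 hn
  have hc : ∀ (k : ℕ) t, ((k:ℝ) + 1 ≤ n * (r t + n)) ↔ (((k:ℝ)+1)/n - n ≤ r t) := by
    intro k t
    rw [sub_le_iff_le_add, div_le_iff₀' hn']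
  have hii : ∀ (s x : ℝ), IntervalIntegrable (fun t => if s ≤ r t then (1:ℝ) else 0)
      volume 0 x := by
    intro s x
    apply Monotone.intervalIntegrable
    intro u v huv
    have := hr huv
    dsimp only
    split_ifs <;> first | linarith | norm_num
  refine (Cls.add _ _ (Cls.affine 0 (-(n:ℝ))) (Cls.smul (Cls.sum
    (fun k x => ∫ t in (0:ℝ)..x, (if ((k:ℝ)+1)/n - n ≤ r t then (1:ℝ) else 0))
    (fun k => cls_upper r hr _) (2 * n ^ 2)) (c := 1 / (n:ℝ)) (by positivity))).congr fun x => ?_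
  unfold sn cnt
  simp_rw [hc]
  rw [intervalIntegral.integral_add (by simp), intervalIntegral.integral_const_mul,
    intervalIntegral.integral_finsetSum]
  · simp [mul_comm]
  · intro k _; exact hii _ _
  · refine IntervalIntegrable.const_mul ?_ _
    have := IntervalIntegrable.sum (μ := volume) (a := 0) (b := x) (Finset.range (2 * n ^ 2))
      (f := fun k t => (if ((k:ℝ)+1)/n - n ≤ r t then (1:ℝ) else 0)) (fun k _ => hii _ _)
    have e2 : (fun t => ∑ k ∈ Finset.range (2 * n ^ 2),
        (if ((k:ℝ)+1)/n - n ≤ r t then (1:ℝ) else 0)) = ∑ k ∈ Finset.range (2 * n ^ 2),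
        fun t => (if ((k:ℝ)+1)/n - n ≤ r t then (1:ℝ) else 0) := by
      ext t; rw [Finset.sum_apply]
    rw [e2]; exact this

lemma convex_approx (φ : ℝ → ℝ) (hφ : ConvexOn ℝ univ φ) :
    ∃ ψ : ℕ → ℝ → ℝ, (∀ n, Cls (ψ n)) ∧
      (∀ x, Filter.Tendsto (fun n => ψ n x) Filter.atTop (nhds (φ x))) ∧
      ∃ a b : ℝ, ∀ n x, |ψ n x| ≤ |φ x| + a + b * |x| := by
  set r : ℝ → ℝ := fun t => derivWithin φ (Ioi t) t with hrdef
  have hr : Monotone r := by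
    have := hφ.monotoneOn_rightDeriv
    rwa [interior_univ, monotoneOn_univ] at this
  have hcont : Continuous φ := continuousOn_univ.1 (hφ.continuousOn isOpen_univ)
  have hint : ∀ a b, ∫ t in a..b, r t = φ b - φ a := by
    intro a b
    refine intervalIntegral.integral_eq_sub_of_hasDeriv_right hcont.continuousOn ?_
      hr.intervalIntegrable
    intro t _
    exact hφ.hasDerivWithinAt_rightDeriv_of_mem_interior (by simp)
  obtain ⟨N0, hN0⟩ := exists_nat_gt (|r 0|)
  have hsi : ∀ n a b, IntervalIntegrable (sn r n) volume a b := fun n a b =>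
    (sn_mono r hr n).intervalIntegrable
  refine ⟨fun n x => φ 0 + ∫ t in (0:ℝ)..x, sn r (n + N0 + 1) t, ?_, ?_, ?_⟩
  · intro n
    exact (Cls.add _ _ (Cls.affine (φ 0) 0) (cls_sn r hr (n + N0 + 1) (by omega))).congr
      fun x => by simp
  · intro x
    obtain ⟨M, hM⟩ := exists_nat_gt (|r x|)
    have hle : ∀ᶠ n : ℕ in Filter.atTop, |(φ 0 + ∫ t in (0:ℝ)..x, sn r (n + N0 + 1) t) - φ x|
        ≤ |x| * (1 / ((n:ℝ) + 1)) := by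
      filter_upwards [Filter.eventually_ge_atTop M] with n hn
      have h1 : (φ 0 + ∫ t in (0:ℝ)..x, sn r (n + N0 + 1) t) - φ x
          = ∫ t in (0:ℝ)..x, (sn r (n + N0 + 1) t - r t) := by
        rw [intervalIntegral.integral_sub (hsi _ _ _) hr.intervalIntegrable, hint]; ring
      rw [h1]
      have hn2 : (M:ℝ) ≤ n := Nat.cast_le.2 hn
      have hN : ((n + N0 + 1 : ℕ) : ℝ) = n + N0 + 1 := by push_cast; ring
      have hnn : (0:ℝ) ≤ n := Nat.cast_nonneg n
      have hN0n : (0:ℝ) ≤ N0 := Nat.cast_nonneg N0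
      have := intervalIntegral.norm_integral_le_of_norm_le_const (a := 0) (b := x)
        (f := fun t => sn r (n + N0 + 1) t - r t) (C := 1 / ((n:ℝ) + 1)) ?_
      · rw [Real.norm_eq_abs, sub_zero, mul_comm] at this; exact this
      · intro t ht
        have hrt : |r t| < n + N0 + 1 := by
          have hx := abs_lt.1 hM
          have h0 := abs_lt.1 hN0
          rw [abs_lt]
          rcases mem_uIoc.1 ht with h | h
          · have := hr h.1.le; have := hr h.2
            constructor <;> linarith
          · have := hr h.1.le; have := hr h.2
            constructor <;> linarith
        obtain ⟨_, _, b3, b4, _⟩ := sn_bounds r (n + N0 + 1) (by omega) t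
        rw [hN] at b3 b4
        have hrt' := abs_lt.1 hrt
        have b4' := b4 hrt'.2
        rw [max_eq_right hrt'.1.le] at b3
        have : 1 / ((n:ℝ) + N0 + 1) ≤ 1 / (n + 1) :=
          one_div_le_one_div_of_le (by linarith) (by linarith)
        rw [Real.norm_eq_abs, abs_le]
        constructor <;> linarith [show (0:ℝ) ≤ 1 / (n + 1) by positivity]
    rw [tendsto_iff_dist_tendsto_zero]
    have hz : Filter.Tendsto (fun n : ℕ => |x| * (1 / ((n:ℝ) + 1))) Filter.atTop (nhds 0) := by
      simpa using (tendsto_one_div_add_atTop_nhds_zero_nat (𝕜 := ℝ)).const_mul (|x|)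
    exact squeeze_zero' (Filter.Eventually.of_forall fun _ => dist_nonneg) hle hz
  · refine ⟨|φ 0|, |r 0| + 1, fun n x => ?_⟩
    have h0 := abs_lt.1 hN0
    have hN : ((n + N0 + 1 : ℕ) : ℝ) = n + N0 + 1 := by push_cast; ring
    have hnn : (0:ℝ) ≤ n := Nat.cast_nonneg n
    have hN0n : (0:ℝ) ≤ N0 := Nat.cast_nonneg N0
    have hd : 1 / ((n:ℝ) + N0 + 1) ≤ 1 := by
      rw [div_le_one (by positivity)]; linarith
    have hlow : ∀ t, min (r t) (r 0) - 1 ≤ sn r (n + N0 + 1) t := by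
      intro t
      obtain ⟨_, _, _, b4, b5⟩ := sn_bounds r (n + N0 + 1) (by omega) t
      rw [hN] at b4 b5
      rcases lt_or_ge (r t) (n + N0 + 1) with h | h
      · have := b4 h; linarith [min_le_left (r t) (r 0)]
      · have := b5 h; linarith [min_le_right (r t) (r 0)]
    have hup : ∀ t, sn r (n + N0 + 1) t ≤ max (r t) (r 0) := by
      intro t
      obtain ⟨_, _, b3, _, _⟩ := sn_bounds r (n + N0 + 1) (by omega) t
      rw [hN] at b3
      refine b3.trans (max_le ?_ (le_max_left _ _))
      exact le_max_of_le_right (by linarith)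
    have hmul : |r 0 * x| = |r 0| * |x| := abs_mul _ _
    have main : φ 0 + r 0 * x - |x| ≤ φ 0 + ∫ t in (0:ℝ)..x, sn r (n + N0 + 1) t ∧
        φ 0 + ∫ t in (0:ℝ)..x, sn r (n + N0 + 1) t ≤ φ x + |x| := by
      rcases le_total 0 x with hx | hx
      · rw [abs_of_nonneg hx]
        have i1 : ∫ _ in (0:ℝ)..x, (r 0 - 1) ≤ ∫ t in (0:ℝ)..x, sn r (n + N0 + 1) t := by
          refine intervalIntegral.integral_mono_on hx (by simp) (hsi _ _ _) fun t ht => ?_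
          have := hlow t
          rwa [min_eq_right (hr ht.1)] at this
        have i2 : ∫ t in (0:ℝ)..x, sn r (n + N0 + 1) t ≤ ∫ t in (0:ℝ)..x, r t := by
          refine intervalIntegral.integral_mono_on hx (hsi _ _ _) hr.intervalIntegrable
            fun t ht => ?_
          have := hup t
          rwa [max_eq_left (hr ht.1)] at this
        rw [hint] at i2
        simp at i1
        constructor <;> linarith
      · rw [abs_of_nonpos hx, intervalIntegral.integral_symm]
        have i1 : ∫ t in x..0, sn r (n + N0 + 1) t ≤ ∫ _ in x..0, (r 0) := by
          refine intervalIntegral.integral_mono_on hx (hsi _ _ _) (by simp) fun t ht => ?_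
          have := hup t
          rwa [max_eq_right (hr ht.2)] at this
        have i2 : ∫ t in x..0, (r t - 1) ≤ ∫ t in x..0, sn r (n + N0 + 1) t := by
          refine intervalIntegral.integral_mono_on hx (hr.intervalIntegrable.sub (by simp))
            (hsi _ _ _) fun t ht => ?_
          have := hlow t
          rwa [min_eq_left (hr ht.2)] at this
        rw [intervalIntegral.integral_sub hr.intervalIntegrable (by simp), hint] at i2
        simp at i1 i2
        constructor <;> linarith
    have a1 := neg_abs_le (φ 0)
    have a2 := neg_abs_le (r 0 * x)
    have a3 := le_abs_self (φ x)
    have a4 := abs_nonneg (φ x)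
    have a5 := abs_nonneg (r 0 * x)
    have a6 := abs_nonneg (φ 0)
    rw [abs_le, add_mul, one_mul, ← hmul]
    constructor <;> linarith [main.1, main.2]

lemma convexOrder_of_cls {α β : Measure ℝ} (hα : Integrable (fun x : ℝ => |x|) α)
    (hβ : Integrable (fun x : ℝ => |x|) β) [IsFiniteMeasure α] [IsFiniteMeasure β]
    (h : ∀ ψ, Cls ψ → ∫ x, ψ x ∂α ≤ ∫ x, ψ x ∂β) : ConvexOrder α β := by
  intro φ hφ iα iβ
  obtain ⟨ψ, hcls, hlim, a, b, hbd⟩ := convex_approx φ hφ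
  have hc : ∀ f, Cls f → Continuous f := by
    intro f hf
    induction hf with
    | affine a b => fun_prop
    | hinge c a hc => fun_prop
    | add f g _ _ h1 h2 => exact h1.add h2
  have hT : ∀ {γ : Measure ℝ}, IsFiniteMeasure γ → Integrable (fun x : ℝ => |x|) γ →
      Integrable φ γ →
      Filter.Tendsto (fun n => ∫ x, ψ n x ∂γ) Filter.atTop (nhds (∫ x, φ x ∂γ)) := by
    intro γ _ h1 h2
    refine tendsto_integral_of_dominated_convergence (fun x => |φ x| + a + b * |x|)
      (fun n => (hc _ (hcls n)).aestronglyMeasurable)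
      ((h2.abs.add (integrable_const a)).add (h1.const_mul b))
      (fun n => Filter.Eventually.of_forall fun x => hbd n x)
      (Filter.Eventually.of_forall hlim)
  exact le_of_tendsto_of_tendsto' (hT inferInstance hα iα) (hT inferInstance hβ iβ)
    fun n => h _ (hcls n)

/-- Theorem 3.2: if μ₁,…,μ_m have equal total masses,
(Fᵢ−Fⱼ)∗(Fᵢ−Fⱼ) ≥ 0 for all i,j, and Q − P = Σ_{i≠j} R_{i,j}·(xᵢ−xⱼ)² with all
polynomials having non-negative coefficients, then P(μ₁,…,μ_m) ≼ₓ Q(μ₁,…,μ_m). -/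
theorem stmt10 (m : ℕ) (μ : Fin m → Measure ℝ) [∀ i, IsFiniteMeasure (μ i)]
    (hint : ∀ i, Integrable (fun x : ℝ => |x|) (μ i))
    (hmass : ∀ i j, μ i Set.univ = μ j Set.univ)
    (hF : ∀ i j, ∀ x : ℝ, 0 ≤ fconv (fun t => distFun (μ i) t - distFun (μ j) t)
      (fun t => distFun (μ i) t - distFun (μ j) t) x)
    (P Q : MvPolynomial (Fin m) ℝ)
    (hP : ∀ d, 0 ≤ MvPolynomial.coeff d P) (hQ : ∀ d, 0 ≤ MvPolynomial.coeff d Q)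
    (R : Fin m → Fin m → MvPolynomial (Fin m) ℝ)
    (hR : ∀ i j d, 0 ≤ MvPolynomial.coeff d (R i j))
    (hdiff : Q - P = ∑ i : Fin m, ∑ j : Fin m,
      if i ≠ j then R i j * (MvPolynomial.X i - MvPolynomial.X j) ^ 2 else 0) :
    ConvexOrder (convPoly P μ) (convPoly Q μ) := by
  have hμ : ∀ i, FM (μ i) := fun i => ⟨inferInstance,
    (integrable_norm_iff (by fun_prop)).1 (by simpa using hint i)⟩
  have hfin : ∀ P : MvPolynomial (Fin m) ℝ, IsFiniteMeasure (convPoly P μ) := by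
    intro P
    have h := integrable_convPoly (μ := μ) (fun _ => (1:ℝ))
      (fun d => by have := (FM.cmon hμ d).1; exact integrable_const _) P
    exact (integrable_const_iff_isFiniteMeasure one_ne_zero).1 h
  have := hfin P
  have := hfin Q
  refine convexOrder_of_cls
    (integrable_convPoly _ (fun d => (FM.cmon hμ d).2.abs) P)
    (integrable_convPoly _ (fun d => (FM.cmon hμ d).2.abs) Q) fun ψ hψ => ?_
  have hI : ∀ d, Integrable ψ (cmon μ d) := fun d => (FM.cmon hμ d).integrable hψ
  rw [integral_convPoly ψ hI P hP, integral_convPoly ψ hI Q hQ, ← sub_nonneg, ← map_sub, hdiff,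
    map_sum]
  refine Finset.sum_nonneg fun i _ => ?_
  rw [map_sum]
  refine Finset.sum_nonneg fun j _ => ?_
  split_ifs
  · exact Lf_nonneg hμ hmass hF hψ (R i j) (hR i j) i j
  · simp
end

section
/- Let p ≺ q be m-tuples of non-negative integers satisfying condition (S). Then the polynomial W^q − W^p can be written as Σ_{1≤u<v≤m} (x_u − x_v)² R_{u,v}(x₁,…,x_m), where each R_{u,v} is a polynomial with non-negative coefficients; explicitly, R_{u,v}(x₁,…,x_m) = Σ_{π∈Π, π(l₁)=u, π(l₂)=v} Σ_{j=q̂_{l₂}}^{p̂_{l₁}−1} (1/m!)·x_u^j x_v^{p̂_{l₁}+q̂_{l₂}−1−j} ∏_{l≠l₁,l₂} x_{π(l)}^{p̂_l}, where l₁ < l₂ are the indices from condition (S). -/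
open MeasureTheory Set

/-- The nonincreasing rearrangement of an m-tuple of naturals. -/
def sortDesc {m : ℕ} (p : Fin m → ℕ) : Fin m → ℕ := fun i => p (Tuple.sort p i.rev)

/-- `Majorizes p q` means `p ≺ q`, i.e. `q` majorizes `p`. -/
def Majorizes {m : ℕ} (p q : Fin m → ℕ) : Prop :=
  (∑ l, sortDesc p l) = (∑ l, sortDesc q l) ∧
    ∀ k : Fin m, ∑ l ∈ Finset.Iic k, sortDesc p l ≤ ∑ l ∈ Finset.Iic k, sortDesc q l

/-- Condition (S) for a pair `p ≺ q`. -/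
def CondS {m : ℕ} (p q : Fin m → ℕ) : Prop :=
  ∃ l₁ l₂ : Fin m, l₁ < l₂ ∧ sortDesc q l₁ = sortDesc p l₁ + 1 ∧
    sortDesc q l₂ + 1 = sortDesc p l₂ ∧
    ∀ l, l ≠ l₁ → l ≠ l₂ → sortDesc q l = sortDesc p l

/-- The symmetrized monomial `W^p(x₁,…,x_m) = (1/m!) Σ_π Π_l x_{π(l)}^{p_l}`. -/
noncomputable def Wpoly {m : ℕ} (p : Fin m → ℕ) (x : Fin m → ℝ) : ℝ :=
  ((m.factorial : ℝ))⁻¹ * ∑ π : Equiv.Perm (Fin m), ∏ l, x (π l) ^ p l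

/-- The convolution polynomial of measures corresponding to `W^p`. -/
noncomputable def Wmeas {m : ℕ} (p : Fin m → ℕ) (μ : Fin m → Measure ℝ) : Measure ℝ :=
  ((m.factorial : ENNReal))⁻¹ •
    ∑ π : Equiv.Perm (Fin m), convList (List.ofFn fun l => convPow (μ (π l)) (p l))

theorem Wpoly_comp {m : ℕ} (p : Fin m → ℕ) (σ : Equiv.Perm (Fin m)) (x : Fin m → ℝ) :
    Wpoly (fun i => p (σ i)) x = Wpoly p x := by
  unfold Wpoly
  congr 1
  rw [← Equiv.sum_comp (Equiv.mulRight σ)]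
  refine Finset.sum_congr rfl fun π _ => ?_
  exact Equiv.prod_comp σ (fun l => x (π l) ^ p l)

theorem Wpoly_sortDesc {m : ℕ} (p : Fin m → ℕ) (x : Fin m → ℝ) :
    Wpoly (sortDesc p) x = Wpoly p x :=
  Wpoly_comp p (Fin.revPerm.trans (Tuple.sort p)) x

theorem sortDesc_anti {m : ℕ} (p : Fin m → ℕ) {i j : Fin m} (h : i ≤ j) :
    sortDesc p j ≤ sortDesc p i :=
  Tuple.monotone_sort p (Fin.rev_le_rev.mpr h)

theorem two_var (X Y : ℝ) (b n : ℕ) :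
    X ^ (b + n + 1) * Y ^ b + Y ^ (b + n + 1) * X ^ b - X ^ (b + n) * Y ^ (b + 1)
      - Y ^ (b + n) * X ^ (b + 1)
    = (X - Y) ^ 2 * ∑ j ∈ Finset.Ico b (b + n), X ^ j * Y ^ (b + n + b - 1 - j) := by
  have h : ∑ j ∈ Finset.Ico b (b + n), X ^ j * Y ^ (b + n + b - 1 - j)
      = (X ^ b * Y ^ b) * ∑ i ∈ Finset.range n, X ^ i * Y ^ (n - 1 - i) := by
    rw [Finset.sum_Ico_eq_sum_range, Finset.mul_sum, Nat.add_sub_cancel_left]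
    refine Finset.sum_congr rfl fun i hi => ?_
    have hi := Finset.mem_range.mp hi
    have : b + n + b - 1 - (b + i) = b + (n - 1 - i) := by omega
    rw [this]; ring
  rw [h]
  have g := (Commute.all X Y).geom_sum₂_mul n
  linear_combination (-(X - Y) * X ^ b * Y ^ b) * g

theorem sum_perm_pair {m : ℕ} (l₁ l₂ : Fin m) (hl : l₁ < l₂) (F : Equiv.Perm (Fin m) → ℝ) :
    ∑ π, F π = ∑ π : Equiv.Perm (Fin m),
      if π l₁ < π l₂ then F π + F (π * Equiv.swap l₁ l₂) else 0 := by
  have e : ∀ π : Equiv.Perm (Fin m), F π =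
      (if π l₁ < π l₂ then F π else 0) + (if π l₂ < π l₁ then F π else 0) := by
    intro π
    have : π l₁ ≠ π l₂ := fun h => hl.ne (π.injective h)
    rcases lt_or_gt_of_ne this with h | h
    · simp [h, h.le]
    · simp [h, h.le]
  rw [Finset.sum_congr rfl fun π _ => e π, Finset.sum_add_distrib,
    ← Equiv.sum_comp (Equiv.mulRight (Equiv.swap l₁ l₂)) fun π : Equiv.Perm (Fin m) =>
      if π l₂ < π l₁ then F π else 0, ← Finset.sum_add_distrib]
  refine Finset.sum_congr rfl fun π _ => ?_
  simp only [Equiv.coe_mulRight, Equiv.Perm.mul_apply, Equiv.swap_apply_left,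
    Equiv.swap_apply_right]
  split_ifs <;> simp

theorem prod_split {m : ℕ} (l₁ l₂ : Fin m) (hl : l₁ ≠ l₂) (f : Fin m → ℝ) :
    ∏ l, f l = f l₁ * f l₂ * ∏ l ∈ Finset.univ.filter (fun l => l ≠ l₁ ∧ l ≠ l₂), f l := by
  have : Finset.univ.filter (fun l => l ≠ l₁ ∧ l ≠ l₂) = (Finset.univ.erase l₁).erase l₂ := by
    ext l; simp [and_comm]
  rw [this, mul_assoc, Finset.mul_prod_erase _ _ (by simp [hl.symm]),
    Finset.mul_prod_erase _ _ (by simp)]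

/-- if p ≺ q satisfies condition (S) with witnesses l₁ < l₂, then
W^q − W^p = Σ_{u<v} (x_u − x_v)² R_{u,v}(x), where R_{u,v} is the explicit polynomial
with non-negative coefficients
R_{u,v}(x) = Σ_{π : π(l₁)=u, π(l₂)=v} Σ_{j=q̂_{l₂}}^{p̂_{l₁}−1}
  (1/m!)·x_u^j x_v^{p̂_{l₁}+q̂_{l₂}−1−j} Π_{l≠l₁,l₂} x_{π(l)}^{p̂_l}. -/
theorem stmt13 (m : ℕ) (p q : Fin m → ℕ) (hpq : Majorizes p q)
    (l₁ l₂ : Fin m) (hl : l₁ < l₂)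
    (h1 : sortDesc q l₁ = sortDesc p l₁ + 1)
    (h2 : sortDesc q l₂ + 1 = sortDesc p l₂)
    (h3 : ∀ l, l ≠ l₁ → l ≠ l₂ → sortDesc q l = sortDesc p l) :
    ∀ x : Fin m → ℝ,
      Wpoly q x - Wpoly p x =
        ∑ u : Fin m, ∑ v ∈ Finset.univ.filter (fun v => u < v),
          (x u - x v) ^ 2 *
            ∑ π ∈ Finset.univ.filter (fun π : Equiv.Perm (Fin m) => π l₁ = u ∧ π l₂ = v),
              ∑ j ∈ Finset.Ico (sortDesc q l₂) (sortDesc p l₁),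
                ((m.factorial : ℝ))⁻¹ * x u ^ j *
                  x v ^ (sortDesc p l₁ + sortDesc q l₂ - 1 - j) *
                  ∏ l ∈ Finset.univ.filter (fun l => l ≠ l₁ ∧ l ≠ l₂),
                    x (π l) ^ sortDesc p l := by
  intro x
  have hle : sortDesc q l₂ + 1 ≤ sortDesc p l₁ := h2 ▸ sortDesc_anti p hl.le
  rw [← Wpoly_sortDesc q, ← Wpoly_sortDesc p]
  generalize sortDesc p = P at *
  generalize sortDesc q = Q at *
  clear hpq
  obtain ⟨n, hn⟩ := Nat.exists_eq_add_of_le (show Q l₂ ≤ P l₁ by omega)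
  generalize hb : Q l₂ = b at *
  have hR : ∀ u v : Fin m, (x u - x v) ^ 2 *
            ∑ π ∈ Finset.univ.filter (fun π : Equiv.Perm (Fin m) => π l₁ = u ∧ π l₂ = v),
              ∑ j ∈ Finset.Ico b (P l₁),
                ((m.factorial : ℝ))⁻¹ * x u ^ j *
                  x v ^ (P l₁ + b - 1 - j) *
                  ∏ l ∈ Finset.univ.filter (fun l => l ≠ l₁ ∧ l ≠ l₂), x (π l) ^ P l
      = ∑ π : Equiv.Perm (Fin m), if π l₁ = u then (if π l₂ = v then
          ((m.factorial : ℝ))⁻¹ * (((x (π l₁) - x (π l₂)) ^ 2 * ∑ j ∈ Finset.Ico b (b + n),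
            x (π l₁) ^ j * x (π l₂) ^ (b + n + b - 1 - j)) *
            ∏ l ∈ Finset.univ.filter (fun l => l ≠ l₁ ∧ l ≠ l₂), x (π l) ^ P l) else 0)
          else 0 := by
    intro u v
    rw [Finset.mul_sum, Finset.sum_filter]
    refine Finset.sum_congr rfl fun π _ => ?_
    rw [ite_and]
    split_ifs with hu hv
    · rw [hu, hv, hn, Finset.mul_sum, Finset.mul_sum, Finset.sum_mul, Finset.mul_sum]
      refine Finset.sum_congr rfl fun j _ => ?_
      ring
    · rfl
    · rfl
  simp only [hR]
  unfold Wpoly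
  rw [← mul_sub, ← Finset.sum_sub_distrib, sum_perm_pair l₁ l₂ hl, Finset.mul_sum]
  have hS : ∀ G : Equiv.Perm (Fin m) → ℝ,
      ∑ u : Fin m, ∑ v ∈ Finset.univ.filter (fun v => u < v), ∑ π : Equiv.Perm (Fin m),
        (if π l₁ = u then (if π l₂ = v then G π else 0) else 0)
      = ∑ π : Equiv.Perm (Fin m), if π l₁ < π l₂ then G π else 0 := by
    intro G
    rw [Finset.sum_congr rfl fun u _ => Finset.sum_comm, Finset.sum_comm]
    refine Finset.sum_congr rfl fun π _ => ?_
    rw [Finset.sum_eq_single (π l₁)]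
    · simp
    · intro u _ hu
      simp [hu.symm]
    · simp
  rw [hS]
  refine Finset.sum_congr rfl fun π _ => ?_
  rw [mul_ite, mul_zero]
  split_ifs
  · congr 1
    have hQ : ∀ τ : Equiv.Perm (Fin m), (∀ l, l ≠ l₁ → l ≠ l₂ → τ l = π l) →
        ∏ l, x (τ l) ^ Q l - ∏ l, x (τ l) ^ P l =
        (x (τ l₁) ^ (b + n + 1) * x (τ l₂) ^ b - x (τ l₁) ^ (b + n) * x (τ l₂) ^ (b + 1)) *
          ∏ l ∈ Finset.univ.filter (fun l => l ≠ l₁ ∧ l ≠ l₂), x (π l) ^ P l := by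
      intro τ hτ
      rw [prod_split l₁ l₂ hl.ne, prod_split l₁ l₂ hl.ne (fun l => x (τ l) ^ P l), h1, hb, ← h2, hn,
        sub_mul]
      congr 2 <;>
      · refine Finset.prod_congr rfl fun l hm => ?_
        have := (Finset.mem_filter.mp hm).2
        simp [hτ l this.1 this.2, h3 l this.1 this.2]
    rw [hQ π (fun _ _ _ => rfl), hQ (π * Equiv.swap l₁ l₂) (fun l ha hb => by
      simp [Equiv.swap_apply_of_ne_of_ne ha hb]), ← two_var]
    simp only [Equiv.Perm.mul_apply, Equiv.swap_apply_left, Equiv.swap_apply_right]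
    ring
  · rfl
end
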